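/- arXiv:1801.10298 — 6 statements merged into one kernel-verified Lean document; each statement's English description precedes it below -/
import Mathlib

section
/- For every real (p+q)×(p+q) matrix X satisfying Xᵀ·I_{p,q} + I_{p,q}·X = 0 (i.e. X ∈ 𝔬(p,q)), the function f_X : W → ℝ defined by f_X(z) = (1/2)·tr(μ(z)·X) is differentiable, and for every z ∈ W and every w ∈ W the differential of f_X at z evaluated at w equals ω(−X·z, w), where X·z := X·x + i·X·y for z = x + i·y. (That is, d⟨μ,X⟩ = ι(X_W)ω with X_W(z) = −Xz, so μ is a moment map for the O(p,q)-action on (W,ω).) -/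
noncomputable section

/-- The matrix `I_{p,q} = diag(1_p, −1_q)` over `ℝ`. -/
def IpqR (p q : ℕ) : Matrix (Fin (p + q)) (Fin (p + q)) ℝ :=
  Matrix.diagonal (fun i => if (i : ℕ) < p then 1 else -1)

/-- The symplectic form `ω(z,w) = Im(z* I_{p,q} w)` on `W = (ℂ^{p+q})_ℝ`. -/
def omegaW (p q : ℕ) (z w : Fin (p + q) → ℂ) : ℝ :=
  (∑ i, (starRingEnd ℂ) (z i) * ((IpqR p q i i : ℝ) : ℂ) * w i).im

/-- The moment map `μ(x + i·y) = (−x·yᵀ + y·xᵀ)·I_{p,q}`. -/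
def muW (p q : ℕ) (z : Fin (p + q) → ℂ) : Matrix (Fin (p + q)) (Fin (p + q)) ℝ :=
  (Matrix.of fun i j => -((z i).re * (z j).im) + (z i).im * (z j).re) * IpqR p q

end

/-!
Write `z = x + i y` and `A = J X`. For symmetric `J`, the condition `Xᵀ J + J X = 0` says that `A`
is skew-symmetric, so `½ tr (μ(z) X) = ½ (xᵀ A y - yᵀ A x) = xᵀ A y` is a bilinear pairing of `x`
with `y`. By the product rule its derivative in the direction `w = u + i v` is `xᵀ A v + uᵀ A y`,
and moving `X` across `J` in `Im ((-X z)* J w)` gives the same expression.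
-/

open Matrix

section Matrices

variable {n R : Type*} [Fintype n]

theorem trace_vecMulVec_mul [CommSemiring R] (u v : n → R) (A : Matrix n n R) :
    trace (vecMulVec u v * A) = v ⬝ᵥ A *ᵥ u := by
  rw [vecMulVec_mul, trace_vecMulVec, dotProduct_comm, dotProduct_mulVec]

variable [CommRing R]

theorem dotProduct_mulVec_swap_of_transpose_eq_neg {A : Matrix n n R} (hA : Aᵀ = -A)
    (u v : n → R) : u ⬝ᵥ A *ᵥ v = -(v ⬝ᵥ A *ᵥ u) := by
  rw [← dotProduct_transpose_mulVec, hA, neg_mulVec, dotProduct_neg]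

variable {J X : Matrix n n R}

theorem transpose_mul_eq_neg_of_isSymm (hJ : J.IsSymm) (hX : Xᵀ * J + J * X = 0) :
    (J * X)ᵀ = -(J * X) := by
  rw [transpose_mul, hJ.eq, eq_neg_of_add_eq_zero_left hX]

theorem neg_mulVec_dotProduct_mulVec (hX : Xᵀ * J + J * X = 0) (u v : n → R) :
    -(X *ᵥ u) ⬝ᵥ J *ᵥ v = u ⬝ᵥ (J * X) *ᵥ v := by
  rw [eq_neg_of_add_eq_zero_right hX, neg_mulVec, dotProduct_neg, neg_dotProduct,
    ← mulVec_mulVec, dotProduct_transpose_mulVec, dotProduct_comm]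

end Matrices

noncomputable section RealAndImaginaryParts

variable {m n : Type*}

/-- The real part `x` of the complex vector `x + i y`, as a continuous `ℝ`-linear map. -/
def rePart : (n → ℂ) →L[ℝ] (n → ℝ) :=
  .piMap fun _ => Complex.reCLM

/-- The imaginary part `y` of the complex vector `x + i y`, as a continuous `ℝ`-linear map. -/
def imPart : (n → ℂ) →L[ℝ] (n → ℝ) :=
  .piMap fun _ => Complex.imCLM

@[simp]
theorem rePart_apply (z : n → ℂ) (i : n) : rePart z i = (z i).re := rfl

@[simp]
theorem imPart_apply (z : n → ℂ) (i : n) : imPart z i = (z i).im := rfl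

variable [Fintype n]

theorem rePart_map_ofReal_mulVec (A : Matrix m n ℝ) (z : n → ℂ) :
    rePart (A.map Complex.ofReal *ᵥ z) = A *ᵥ rePart z := by
  ext i
  simp [mulVec, dotProduct]

theorem imPart_map_ofReal_mulVec (A : Matrix m n ℝ) (z : n → ℂ) :
    imPart (A.map Complex.ofReal *ᵥ z) = A *ᵥ imPart z := by
  ext i
  simp [mulVec, dotProduct]

theorem im_star_dotProduct (z w : n → ℂ) :
    (star z ⬝ᵥ w).im = rePart z ⬝ᵥ imPart w - imPart z ⬝ᵥ rePart w := by
  simp [dotProduct, Finset.sum_add_distrib, sub_eq_add_neg]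

/-- The bilinear pairing `(x, y) ↦ xᵀ A y`, as a continuous bilinear map, so that the product rule
for continuous bilinear maps applies to it. -/
def matrixPairing [Fintype m] (A : Matrix m n ℝ) : (m → ℝ) →L[ℝ] (n → ℝ) →L[ℝ] ℝ :=
  ((dotProductBilin ℝ ℝ).compl₂ A.mulVecLin).toContinuousBilinearMap

@[simp]
theorem matrixPairing_apply [Fintype m] (A : Matrix m n ℝ) (x : m → ℝ) (y : n → ℝ) :
    matrixPairing A x y = x ⬝ᵥ A *ᵥ y := rfl

theorem hasFDerivAt_matrixPairing_rePart_imPart (A : Matrix n n ℝ) (z : n → ℂ) :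
    HasFDerivAt (fun z => matrixPairing A (rePart z) (imPart z))
      (matrixPairing A (rePart z) ∘L imPart + (matrixPairing A).flip (imPart z) ∘L rePart) z :=
  (matrixPairing A).hasFDerivAt_of_bilinear rePart.hasFDerivAt imPart.hasFDerivAt

end RealAndImaginaryParts

section MomentMap

variable {n : Type*} [Fintype n]

/-- The form `Im (z* J w)` on `ℂⁿ` attached to a real matrix `J`; for `J = I_{p,q}` it is the
symplectic form `ω`. -/
def imForm (J : Matrix n n ℝ) (z w : n → ℂ) : ℝ :=
  (star z ⬝ᵥ J.map Complex.ofReal *ᵥ w).im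

/-- The map `x + i y ↦ (-x yᵀ + y xᵀ) J` attached to a real matrix `J`; for `J = I_{p,q}` it is
the moment map `μ`. -/
noncomputable def momentMap (J : Matrix n n ℝ) (z : n → ℂ) : Matrix n n ℝ :=
  (-vecMulVec (rePart z) (imPart z) + vecMulVec (imPart z) (rePart z)) * J

theorem imForm_eq_sub (J : Matrix n n ℝ) (z w : n → ℂ) :
    imForm J z w = rePart z ⬝ᵥ J *ᵥ imPart w - imPart z ⬝ᵥ J *ᵥ rePart w := by
  rw [imForm, im_star_dotProduct, rePart_map_ofReal_mulVec, imPart_map_ofReal_mulVec]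

theorem trace_momentMap_mul (J X : Matrix n n ℝ) (z : n → ℂ) :
    trace (momentMap J z * X) =
      rePart z ⬝ᵥ (J * X) *ᵥ imPart z - imPart z ⬝ᵥ (J * X) *ᵥ rePart z := by
  rw [momentMap, Matrix.mul_assoc, Matrix.add_mul, Matrix.neg_mul, trace_add, trace_neg,
    trace_vecMulVec_mul, trace_vecMulVec_mul, neg_add_eq_sub]

variable {J X : Matrix n n ℝ}

theorem half_trace_momentMap_mul (hJ : J.IsSymm) (hX : Xᵀ * J + J * X = 0) (z : n → ℂ) :
    (1 / 2 : ℝ) * trace (momentMap J z * X) = matrixPairing (J * X) (rePart z) (imPart z) := by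
  have hskew := transpose_mul_eq_neg_of_isSymm hJ hX
  rw [trace_momentMap_mul, dotProduct_mulVec_swap_of_transpose_eq_neg hskew (imPart z),
    matrixPairing_apply]
  ring

theorem imForm_neg_mulVec (hJ : J.IsSymm) (hX : Xᵀ * J + J * X = 0) (z w : n → ℂ) :
    imForm J (-(X.map Complex.ofReal *ᵥ z)) w =
      rePart z ⬝ᵥ (J * X) *ᵥ imPart w + rePart w ⬝ᵥ (J * X) *ᵥ imPart z := by
  have hskew := transpose_mul_eq_neg_of_isSymm hJ hX
  rw [imForm_eq_sub, map_neg, map_neg, rePart_map_ofReal_mulVec, imPart_map_ofReal_mulVec,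
    neg_mulVec_dotProduct_mulVec hX, neg_mulVec_dotProduct_mulVec hX,
    dotProduct_mulVec_swap_of_transpose_eq_neg hskew (imPart z), sub_neg_eq_add]

theorem stmt_0_general (hJ : J.IsSymm) (hX : Xᵀ * J + J * X = 0) :
    Differentiable ℝ (fun z => (1 / 2 : ℝ) * trace (momentMap J z * X)) ∧
    ∀ z w, fderiv ℝ (fun z => (1 / 2 : ℝ) * trace (momentMap J z * X)) z w =
      imForm J (-(X.map Complex.ofReal *ᵥ z)) w := by
  have hderiv := hasFDerivAt_matrixPairing_rePart_imPart (J * X)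
  simp only [half_trace_momentMap_mul hJ hX, imForm_neg_mulVec hJ hX]
  refine ⟨fun z => (hderiv z).differentiableAt, fun z w => ?_⟩
  rw [(hderiv z).fderiv]
  rfl

end MomentMap

theorem isSymm_IpqR (p q : ℕ) : (IpqR p q).IsSymm :=
  isSymm_diagonal _

theorem omegaW_eq_imForm (p q : ℕ) : omegaW p q = imForm (IpqR p q) := by
  ext z w
  simp [omegaW, imForm, IpqR, dotProduct, diagonal_map, mulVec_diagonal, mul_assoc]

theorem muW_eq_momentMap (p q : ℕ) : muW p q = momentMap (IpqR p q) :=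
  rfl

theorem stmt_0 (p q : ℕ) (hp : 1 ≤ p) (hq : 1 ≤ q)
    (X : Matrix (Fin (p + q)) (Fin (p + q)) ℝ)
    (hX : X.transpose * IpqR p q + IpqR p q * X = 0) :
    Differentiable ℝ
      (fun z : Fin (p + q) → ℂ => (1 / 2 : ℝ) * Matrix.trace (muW p q z * X)) ∧
    ∀ z w : Fin (p + q) → ℂ,
      fderiv ℝ (fun z : Fin (p + q) → ℂ => (1 / 2 : ℝ) * Matrix.trace (muW p q z * X)) z w =
        omegaW p q (fun i => -∑ j, ((X i j : ℝ) : ℂ) * z j) w := by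
  rw [muW_eq_momentMap, omegaW_eq_imForm]
  exact stmt_0_general (isSymm_IpqR p q) hX
end

section
/- For every g ∈ O(p,q), i.e. every real (p+q)×(p+q) matrix g with gᵀ·I_{p,q}·g = I_{p,q}, and every z ∈ W, one has μ(g·z) = g·μ(z)·g⁻¹, where g·z := g·x + i·g·y for z = x + i·y. (That is, the map μ is O(p,q)-equivariant.) -/
section Wedge

open Matrix

variable {m n R : Type*} [CommRing R]

/-- The bivector `x ∧ y`, encoded as the alternating matrix `x yᵀ - y xᵀ`. The moment map sends
`x + i y` to `y ∧ x` multiplied by the Gram matrix of the bilinear form. -/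
def wedgeMatrix (x y : n → R) : Matrix n n R :=
  vecMulVec x y - vecMulVec y x

variable [Fintype n]

theorem wedgeMatrix_mulVec (g : Matrix m n R) (x y : n → R) :
    wedgeMatrix (g *ᵥ x) (g *ᵥ y) = g * wedgeMatrix x y * gᵀ := by
  simp only [wedgeMatrix, Matrix.mul_sub, Matrix.sub_mul, mul_vecMulVec, vecMulVec_mul,
    vecMul_transpose]

variable [DecidableEq n] {g J : Matrix n n R}

theorem isUnit_det_of_transpose_mul_mul_eq (hJ : IsUnit J.det) (hg : gᵀ * J * g = J) :
    IsUnit g.det := by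
  rw [← hg, det_mul] at hJ
  exact isUnit_of_mul_isUnit_right hJ

theorem transpose_mul_eq_mul_inv (hg_unit : IsUnit g.det) (hg : gᵀ * J * g = J) :
    gᵀ * J = J * g⁻¹ := by
  calc gᵀ * J = gᵀ * J * g * g⁻¹ := (mul_nonsing_inv_cancel_right g _ hg_unit).symm
    _ = J * g⁻¹ := by rw [hg]

theorem stmt_1_general (hg_unit : IsUnit g.det) (hg : gᵀ * J * g = J) (x y : n → R) :
    wedgeMatrix (g *ᵥ x) (g *ᵥ y) * J = g * (wedgeMatrix x y * J) * g⁻¹ := by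
  calc wedgeMatrix (g *ᵥ x) (g *ᵥ y) * J
    _ = g * wedgeMatrix x y * (gᵀ * J) := by rw [wedgeMatrix_mulVec, Matrix.mul_assoc]
    _ = g * wedgeMatrix x y * (J * g⁻¹) := by rw [transpose_mul_eq_mul_inv hg_unit hg]
    _ = g * (wedgeMatrix x y * J) * g⁻¹ := by simp only [Matrix.mul_assoc]

end Wedge

section Complex

open Matrix

variable {m n : Type*} [Fintype n]

theorem re_comp_sum_ofReal_mul (g : Matrix m n ℝ) (z : n → ℂ) :
    (Complex.re ∘ fun i => ∑ j, (g i j : ℂ) * z j) = g *ᵥ (Complex.re ∘ z) := by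
  ext i
  simp [mulVec, dotProduct]

theorem im_comp_sum_ofReal_mul (g : Matrix m n ℝ) (z : n → ℂ) :
    (Complex.im ∘ fun i => ∑ j, (g i j : ℂ) * z j) = g *ᵥ (Complex.im ∘ z) := by
  ext i
  simp [mulVec, dotProduct]

end Complex

theorem isUnit_det_IpqR (p q : ℕ) : IsUnit (IpqR p q).det := by
  rw [IpqR, Matrix.det_diagonal, isUnit_iff_ne_zero, Finset.prod_ne_zero_iff]
  intro i _
  split_ifs <;> norm_num

theorem muW_eq_wedgeMatrix_mul (p q : ℕ) (z : Fin (p + q) → ℂ) :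
    muW p q z = wedgeMatrix (Complex.im ∘ z) (Complex.re ∘ z) * IpqR p q := by
  rw [muW]
  congr 1
  ext i j
  simp [wedgeMatrix, Matrix.vecMulVec_apply, neg_add_eq_sub]

theorem stmt_1 (p q : ℕ) (hp : 1 ≤ p) (hq : 1 ≤ q)
    (g : Matrix (Fin (p + q)) (Fin (p + q)) ℝ)
    (hg : g.transpose * IpqR p q * g = IpqR p q)
    (z : Fin (p + q) → ℂ) :
    muW p q (fun i => ∑ j, ((g i j : ℝ) : ℂ) * z j) = g * muW p q z * g⁻¹ := by
  simp only [muW_eq_wedgeMatrix_mul, re_comp_sum_ofReal_mul, im_comp_sum_ofReal_mul]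
  exact stmt_1_general (isUnit_det_of_transpose_mul_mul_eq (isUnit_det_IpqR p q) hg) hg _ _
end

section
/- The endomorphisms H, X⁺, X⁻ of R satisfy the commutation relations of 𝔰𝔩₂: [H, X⁺] = 2·X⁺, [H, X⁻] = −2·X⁻, and [X⁺, X⁻] = H, where [A,B] = A∘B − B∘A. -/
noncomputable section

/-- The polynomial ring `ℂ[x₁,…,x_p, y₁,…,y_q]`. -/
abbrev Rpq (p q : ℕ) := MvPolynomial (Fin p ⊕ Fin q) ℂ

/-- Multiplication by `x_i`. -/
def xop (p q : ℕ) (i : Fin p) : Module.End ℂ (Rpq p q) :=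
  LinearMap.mulLeft ℂ (MvPolynomial.X (Sum.inl i))

/-- Multiplication by `y_j`. -/
def yop (p q : ℕ) (j : Fin q) : Module.End ℂ (Rpq p q) :=
  LinearMap.mulLeft ℂ (MvPolynomial.X (Sum.inr j))

/-- The partial derivative `∂_{x_i}`. -/
def dx (p q : ℕ) (i : Fin p) : Module.End ℂ (Rpq p q) :=
  (MvPolynomial.pderiv (Sum.inl i)).toLinearMap

/-- The partial derivative `∂_{y_j}`. -/
def dy (p q : ℕ) (j : Fin q) : Module.End ℂ (Rpq p q) :=
  (MvPolynomial.pderiv (Sum.inr j)).toLinearMap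

/-- The Euler operator `E_x = Σ_i x_i ∂_{x_i}`. -/
def Eop_x (p q : ℕ) : Module.End ℂ (Rpq p q) := ∑ i : Fin p, xop p q i * dx p q i

/-- The Euler operator `E_y = Σ_j y_j ∂_{y_j}`. -/
def Eop_y (p q : ℕ) : Module.End ℂ (Rpq p q) := ∑ j : Fin q, yop p q j * dy p q j

/-- Multiplication by `r_x² = Σ_i x_i²`. -/
def rx2 (p q : ℕ) : Module.End ℂ (Rpq p q) :=
  LinearMap.mulLeft ℂ (∑ i : Fin p, MvPolynomial.X (Sum.inl i) ^ 2)

/-- Multiplication by `r_y² = Σ_j y_j²`. -/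
def ry2 (p q : ℕ) : Module.End ℂ (Rpq p q) :=
  LinearMap.mulLeft ℂ (∑ j : Fin q, MvPolynomial.X (Sum.inr j) ^ 2)

/-- The Laplacian `Δ_x = Σ_i ∂_{x_i}²`. -/
def Δx (p q : ℕ) : Module.End ℂ (Rpq p q) := ∑ i : Fin p, dx p q i * dx p q i

/-- The Laplacian `Δ_y = Σ_j ∂_{y_j}²`. -/
def Δy (p q : ℕ) : Module.End ℂ (Rpq p q) := ∑ j : Fin q, dy p q j * dy p q j

/-- `H = −E_x − (p/2)·id + E_y + (q/2)·id`. -/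
def Hop (p q : ℕ) : Module.End ℂ (Rpq p q) :=
  -Eop_x p q - ((p : ℂ) / 2) • 1 + Eop_y p q + ((q : ℂ) / 2) • 1

/-- `X⁺ = −(1/2)(Δ_x + r_y²)`. -/
def Xplus (p q : ℕ) : Module.End ℂ (Rpq p q) :=
  -((1 : ℂ) / 2) • (Δx p q + ry2 p q)

/-- `X⁻ = (1/2)(r_x² + Δ_y)`. -/
def Xminus (p q : ℕ) : Module.End ℂ (Rpq p q) :=
  ((1 : ℂ) / 2) • (rx2 p q + Δy p q)

/-- The matrix `I_{p,q} = diag(1_p, −1_q)` over `ℂ`. -/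
def IpqC (p q : ℕ) : Matrix (Fin (p + q)) (Fin (p + q)) ℂ :=
  Matrix.diagonal (fun i => if (i : ℕ) < p then 1 else -1)

end

/-!
If elements `aᵢ, dᵢ` of an associative algebra satisfy the canonical commutation relations, then
`-∑ aᵢdᵢ - n/2`, `-½ ∑ dᵢ²`, `½ ∑ aᵢ²` satisfy the relations of `𝔰𝔩₂`. The substitution
`(a, d) ↦ (d, -a)`, algebraically the Fourier transform, preserves the canonical commutation
relations, so `∑ aᵢdᵢ + n/2`, `-½ ∑ aᵢ²`, `½ ∑ dᵢ²` is another such triple. The operators `H`, `X⁺`,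
`X⁻` are the sums of the first triple in the variables `x` and the second one in the variables `y`,
and these two triples commute.
-/

/-- The relations of the standard basis of `𝔰𝔩₂`. Unlike for `IsSl2Triple`, `h` may vanish, so that
sums of commuting triples are again of this kind. -/
structure Sl2Relations {L : Type*} [LieRing L] (h e f : L) : Prop where
  lie_h_e : ⁅h, e⁆ = 2 • e
  lie_h_f : ⁅h, f⁆ = -(2 • f)
  lie_e_f : ⁅e, f⁆ = h

namespace Sl2Relations

variable {L : Type*} [LieRing L] {h e f h' e' f' : L}

theorem lie_h_eq_zero (t : Sl2Relations h e f) {z : L} (he : ⁅e, z⁆ = 0) (hf : ⁅f, z⁆ = 0) :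
    ⁅h, z⁆ = 0 := by
  rw [← t.lie_e_f, lie_lie, he, hf, lie_zero, lie_zero, sub_zero]

theorem add (t : Sl2Relations h e f) (t' : Sl2Relations h' e' f') (hee : ⁅e, e'⁆ = 0)
    (hef : ⁅e, f'⁆ = 0) (hfe : ⁅f, e'⁆ = 0) (hff : ⁅f, f'⁆ = 0) :
    Sl2Relations (h + h') (e + e') (f + f') := by
  have hfe' : ⁅e', f⁆ = 0 := by rw [← lie_skew, hfe, neg_zero]
  have hhe : ⁅h, e'⁆ = 0 := t.lie_h_eq_zero hee hfe
  have hhf : ⁅h, f'⁆ = 0 := t.lie_h_eq_zero hef hff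
  have hhe' : ⁅h', e⁆ = 0 :=
    t'.lie_h_eq_zero (by rw [← lie_skew, hee, neg_zero]) (by rw [← lie_skew, hef, neg_zero])
  have hhf' : ⁅h', f⁆ = 0 := t'.lie_h_eq_zero hfe' (by rw [← lie_skew, hff, neg_zero])
  constructor
  · simp only [add_lie, lie_add, t.lie_h_e, t'.lie_h_e, hhe, hhe', smul_add, add_zero, zero_add]
  · simp only [add_lie, lie_add, t.lie_h_f, t'.lie_h_f, hhf, hhf', smul_add, neg_add, add_zero,
      zero_add]
  · simp only [add_lie, lie_add, t.lie_e_f, t'.lie_e_f, hef, hfe', add_zero, zero_add]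

end Sl2Relations

attribute [local instance] LieRing.ofAssociativeRing

section RingCommutator

variable {A : Type*} [Ring A]

theorem ring_lie_mul (x y z : A) : ⁅x, y * z⁆ = ⁅x, y⁆ * z + y * ⁅x, z⁆ := by
  simp only [Ring.lie_def]
  noncomm_ring

theorem ring_mul_lie (x y z : A) : ⁅x * y, z⁆ = x * ⁅y, z⁆ + ⁅x, z⁆ * y := by
  simp only [Ring.lie_def]
  noncomm_ring

variable {ι : Type*} [Fintype ι]

/-- The sum of squares `∑ uᵢ²`: the operator `r²` when `u` consists of the multiplications by the
variables, the Laplacian when it consists of the partial derivatives. -/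
def sumSq (u : ι → A) : A := ∑ i, u i * u i

/-- The Euler element `∑ aᵢdᵢ`, with the `dᵢ` on the right as for the Euler vector field. -/
def euler (a d : ι → A) : A := ∑ i, a i * d i

theorem sumSq_neg (u : ι → A) : sumSq (-u) = sumSq u := by
  simp only [sumSq, Pi.neg_apply, neg_mul_neg]

theorem commute_sumSq {κ : Type*} [Fintype κ] {u : ι → A} {v : κ → A}
    (h : ∀ i j, Commute (u i) (v j)) : Commute (sumSq u) (sumSq v) :=
  Commute.sum_left _ _ _ fun i _ ↦ Commute.sum_right _ _ _ fun j _ ↦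
    ((h i j).mul_right (h i j)).mul_left ((h i j).mul_right (h i j))

end RingCommutator

/-- The canonical commutation relations between families of positions `a` and momenta `d`,
normalized as for the multiplications by the variables and the partial derivatives. -/
structure IsCanonicalPair {A ι : Type*} [Ring A] [DecidableEq ι] (a d : ι → A) : Prop where
  commute_left : ∀ i j, Commute (a i) (a j)
  commute_right : ∀ i j, Commute (d i) (d j)
  lie_right_left : ∀ i j, ⁅d i, a j⁆ = if i = j then 1 else 0

namespace IsCanonicalPair

variable {A ι κ : Type*} [Ring A] [DecidableEq ι] [DecidableEq κ] {a d : ι → A}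

theorem right_mul_left_self (c : IsCanonicalPair a d) (i : ι) : d i * a i = a i * d i + 1 := by
  rw [← sub_eq_iff_eq_add', ← Ring.lie_def, c.lie_right_left, if_pos rfl]

theorem commute_right_left (c : IsCanonicalPair a d) {i j : ι} (hij : i ≠ j) :
    Commute (d i) (a j) :=
  commute_iff_lie_eq.2 ((c.lie_right_left i j).trans (if_neg hij))

theorem comp (c : IsCanonicalPair a d) {g : κ → ι} (hg : g.Injective) :
    IsCanonicalPair (a ∘ g) (d ∘ g) where
  commute_left i j := c.commute_left (g i) (g j)
  commute_right i j := c.commute_right (g i) (g j)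
  lie_right_left i j := by
    simp only [Function.comp_apply, c.lie_right_left, hg.eq_iff]

theorem fourier (c : IsCanonicalPair a d) : IsCanonicalPair d (-a) where
  commute_left := c.commute_right
  commute_right i j := ((c.commute_left i j).neg_left).neg_right
  lie_right_left i j := by
    simp only [Pi.neg_apply, neg_lie, lie_skew, c.lie_right_left, eq_comm (a := j)]

variable [Fintype ι]

theorem euler_fourier (c : IsCanonicalPair a d) :
    euler d (-a) = -(euler a d + Fintype.card ι • 1) := by
  simp only [euler, Pi.neg_apply, mul_neg, c.right_mul_left_self, Finset.sum_neg_distrib,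
    Finset.sum_add_distrib, Finset.sum_const, Finset.card_univ]

theorem lie_euler_left (c : IsCanonicalPair a d) (j : ι) : ⁅euler a d, a j⁆ = a j := by
  simp only [euler, sum_lie, ring_mul_lie, c.lie_right_left, (c.commute_left _ j).lie_eq,
    mul_ite, mul_one, mul_zero, zero_mul, add_zero, Finset.sum_ite_eq', Finset.mem_univ, if_true]

theorem lie_euler_sumSq_left (c : IsCanonicalPair a d) :
    ⁅euler a d, sumSq a⁆ = 2 • sumSq a := by
  simp only [sumSq, lie_sum, ring_lie_mul, c.lie_euler_left, ← two_nsmul, Finset.smul_sum]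

theorem lie_euler_sumSq_right (c : IsCanonicalPair a d) :
    ⁅euler a d, sumSq d⁆ = -(2 • sumSq d) := by
  have h := c.fourier.lie_euler_sumSq_left
  rwa [c.euler_fourier, neg_lie, add_lie, nsmul_lie, (Commute.one_left (sumSq d)).lie_eq,
    smul_zero, add_zero, neg_eq_iff_eq_neg] at h

theorem lie_sumSq_right_left (c : IsCanonicalPair a d) (j : ι) : ⁅sumSq d, a j⁆ = 2 • d j := by
  simp only [sumSq, sum_lie, ring_mul_lie, c.lie_right_left, mul_ite, ite_mul, mul_one, one_mul,
    mul_zero, zero_mul, Finset.sum_add_distrib, Finset.sum_ite_eq', Finset.mem_univ, if_true,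
    two_nsmul]

theorem lie_sumSq_sumSq (c : IsCanonicalPair a d) :
    ⁅sumSq d, sumSq a⁆ = 4 • euler a d + 2 • Fintype.card ι • (1 : A) := by
  have h (j : ι) : ⁅sumSq d, a j * a j⁆ = 4 • (a j * d j) + 2 • 1 := by
    rw [ring_lie_mul, c.lie_sumSq_right_left, smul_mul_assoc, mul_smul_comm,
      c.right_mul_left_self]
    module
  calc ⁅sumSq d, sumSq a⁆ = ∑ j, ⁅sumSq d, a j * a j⁆ := lie_sum _ _ _
    _ = ∑ j, (4 • (a j * d j) + 2 • (1 : A)) := Finset.sum_congr rfl fun j _ ↦ h j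
    _ = 4 • euler a d + 2 • Fintype.card ι • (1 : A) := by
        rw [Finset.sum_add_distrib, ← Finset.smul_sum, ← Finset.smul_sum, Finset.sum_const,
          Finset.card_univ, euler]

variable (K : Type*) [Field K] [NeZero (2 : K)] [Algebra K A]

theorem sl2Relations (c : IsCanonicalPair a d) :
    Sl2Relations (-euler a d - ((Fintype.card ι : K) / 2) • (1 : A))
      (-((1 : K) / 2) • sumSq d) (((1 : K) / 2) • sumSq a) := by
  have lie_h (z : A) :
      ⁅-euler a d - ((Fintype.card ι : K) / 2) • (1 : A), z⁆ = -⁅euler a d, z⁆ := by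
    rw [sub_lie, smul_lie, (Commute.one_left z).lie_eq, smul_zero, sub_zero, neg_lie]
  constructor
  · rw [lie_h, LieAlgebra.lie_smul, c.lie_euler_sumSq_right]
    module
  · rw [lie_h, LieAlgebra.lie_smul, c.lie_euler_sumSq_left]
    module
  · rw [smul_lie, LieAlgebra.lie_smul, c.lie_sumSq_sumSq]
    match_scalars <;> field_simp
    norm_num

theorem sl2Relations_fourier (c : IsCanonicalPair a d) :
    Sl2Relations (euler a d + ((Fintype.card ι : K) / 2) • (1 : A))
      (-((1 : K) / 2) • sumSq a) (((1 : K) / 2) • sumSq d) := by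
  have h_eq : -euler d (-a) - ((Fintype.card ι : K) / 2) • (1 : A) =
      euler a d + ((Fintype.card ι : K) / 2) • (1 : A) := by
    rw [c.euler_fourier]
    match_scalars <;> field_simp
    norm_num
  simpa only [sumSq_neg, h_eq] using c.fourier.sl2Relations K

theorem sl2Relations_sum [Fintype κ] {a d : ι ⊕ κ → A} (c : IsCanonicalPair a d) :
    Sl2Relations
      (-euler (a ∘ Sum.inl) (d ∘ Sum.inl) - ((Fintype.card ι : K) / 2) • (1 : A) +
        (euler (a ∘ Sum.inr) (d ∘ Sum.inr) + ((Fintype.card κ : K) / 2) • (1 : A)))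
      (-((1 : K) / 2) • sumSq (d ∘ Sum.inl) + -((1 : K) / 2) • sumSq (a ∘ Sum.inr))
      (((1 : K) / 2) • sumSq (a ∘ Sum.inl) + ((1 : K) / 2) • sumSq (d ∘ Sum.inr)) := by
  have lie_smul_sumSq {u : ι → A} {v : κ → A} (r s : K) (h : ∀ i j, Commute (u i) (v j)) :
      ⁅r • sumSq u, s • sumSq v⁆ = 0 :=
    (((commute_sumSq h).smul_left r).smul_right s).lie_eq
  exact ((c.comp Sum.inl_injective).sl2Relations K).add
    ((c.comp Sum.inr_injective).sl2Relations_fourier K)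
    (lie_smul_sumSq _ _ fun _ _ ↦ c.commute_right_left Sum.inl_ne_inr)
    (lie_smul_sumSq _ _ fun _ _ ↦ c.commute_right _ _)
    (lie_smul_sumSq _ _ fun _ _ ↦ c.commute_left _ _)
    (lie_smul_sumSq _ _ fun _ _ ↦ (c.commute_right_left Sum.inr_ne_inl).symm)

end IsCanonicalPair

section PolynomialOperators

open MvPolynomial

variable {σ : Type*} (R : Type*) [CommRing R]

theorem commute_pderiv (i j : σ) :
    Commute (pderiv (R := R) i).toLinearMap (pderiv (R := R) j).toLinearMap := by
  classical
  have lie_eq_zero : ⁅pderiv (R := R) i, pderiv (R := R) j⁆ = 0 :=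
    derivation_ext fun k ↦ by
      simp [Derivation.commutator_apply, pderiv_X, Pi.single_apply, apply_ite]
  rw [commute_iff_lie_eq, ← Derivation.commutator_coe_linear_map, lie_eq_zero,
    Derivation.coe_zero_linearMap]

theorem isCanonicalPair_X_pderiv [DecidableEq σ] :
    IsCanonicalPair (fun i : σ ↦ LinearMap.mulLeft R (X i : MvPolynomial σ R))
      (fun i ↦ (pderiv i).toLinearMap) where
  commute_left i j := LinearMap.ext fun f ↦ mul_left_comm (X i) (X j) f
  commute_right := commute_pderiv R
  lie_right_left i j := by
    refine LinearMap.ext fun f ↦ ?_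
    rcases eq_or_ne i j with rfl | hij
    · simp [Ring.lie_def]
    · simp [Ring.lie_def, pderiv_X_of_ne hij.symm, hij]

variable {R}

theorem mulLeft_sum_X_sq {ι : Type*} [Fintype ι] (g : ι → σ) :
    LinearMap.mulLeft R (∑ i, X (g i) ^ 2 : MvPolynomial σ R) =
      sumSq fun i ↦ LinearMap.mulLeft R (X (g i) : MvPolynomial σ R) := by
  refine LinearMap.ext fun f ↦ ?_
  simp [sumSq, Finset.sum_mul, pow_two, mul_assoc]

end PolynomialOperators

theorem sl2Relations_Hop_Xplus_Xminus (p q : ℕ) :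
    Sl2Relations (Hop p q) (Xplus p q) (Xminus p q) := by
  have t := (isCanonicalPair_X_pderiv (σ := Fin p ⊕ Fin q) ℂ).sl2Relations_sum ℂ
  rw [Fintype.card_fin, Fintype.card_fin, ← smul_add, ← smul_add, ← add_assoc] at t
  rw [Xplus, Xminus, rx2, ry2, mulLeft_sum_X_sq, mulLeft_sum_X_sq]
  exact t

theorem stmt_4 (p q : ℕ) (hp : 1 ≤ p) (hq : 1 ≤ q) :
    Hop p q * Xplus p q - Xplus p q * Hop p q = (2 : ℂ) • Xplus p q ∧
    Hop p q * Xminus p q - Xminus p q * Hop p q = (-2 : ℂ) • Xminus p q ∧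
    Xplus p q * Xminus p q - Xminus p q * Xplus p q = Hop p q := by
  have t := sl2Relations_Hop_Xplus_Xminus p q
  simp only [← Ring.lie_def]
  refine ⟨?_, ?_, t.lie_e_f⟩
  · rw [t.lie_h_e]
    module
  · rw [t.lie_h_f]
    module
end

section
/- Each of the endomorphisms H, X⁺, X⁻ of R commutes with every operator in the image of the 𝔬(p,q)-representation π; concretely, for all 1 ≤ i,j ≤ p the operator −x_j∂_{x_i} + x_i∂_{x_j} commutes with H, X⁺ and X⁻; for all 1 ≤ i,j ≤ q the operator −y_j∂_{y_i} + y_i∂_{y_j} commutes with H, X⁺ and X⁻; and for all 1 ≤ i ≤ p, 1 ≤ j ≤ q the operator i·(x_i y_j + ∂_{x_i}∂_{y_j}) (i the imaginary unit) commutes with H, X⁺ and X⁻. -/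
/-!
Exchanging the roles of multiplication and differentiation in the `y`-variables (an algebraic
partial Fourier transform) gives canonical pairs `a = (x, ∂_y)`, `b = (∂_x, -y)`. In these
coordinates `X⁻ = ½ ∑ a²`, `X⁺ = -½ ∑ b²` and `H = -∑ a b - ½ (p + q)`, while the operators of
`𝔬(p,q)` become, up to scalars, the angular momenta `a_s b_t - a_t b_s`. Under brackets with the
angular momenta both `a` and `b` transform as vectors, so the three dot products `a·a`, `b·b`
and `a·b` are invariant.
-/

section CanonicalPairs

variable {ι κ A : Type*} [Ring A]

attribute [local instance] LieRing.ofAssociativeRing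

theorem lie_mul_leibniz (a b c : A) : ⁅a, b * c⁆ = ⁅a, b⁆ * c + b * ⁅a, c⁆ := by
  simp only [Ring.lie_def]
  noncomm_ring

theorem mul_lie_leibniz (a b c : A) : ⁅a * b, c⁆ = a * ⁅b, c⁆ + ⁅a, c⁆ * b := by
  simp only [Ring.lie_def]
  noncomm_ring

/-- The operator `a_s b_t - a_t b_s`, the generator of rotations in the `(s, t)`-plane when
`a` are positions and `b` the conjugate momenta. -/
def angularMomentum (a b : ι → A) (s t : ι) : A :=
  a s * b t - a t * b s

variable [DecidableEq ι] [DecidableEq κ]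

/-- The family `f` transforms under brackets with `L` as the coordinates of a vector transform
under the infinitesimal rotations of the coordinate planes. -/
def IsVectorOperator (L : ι → ι → A) (f : ι → A) : Prop :=
  ∀ s t u, ⁅L s t, f u⁆ = (if t = u then f s else 0) - if s = u then f t else 0

theorem IsVectorOperator.commute_sum_mul [Fintype ι] {L : ι → ι → A} {f g : ι → A}
    (hf : IsVectorOperator L f) (hg : IsVectorOperator L g) (s t : ι) :
    Commute (L s t) (∑ u, f u * g u) := by
  rw [commute_iff_lie_eq, lie_sum]
  simp [lie_mul_leibniz, hf s t, hg s t, sub_mul, mul_sub, Finset.sum_add_distrib]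

/-- Families `a` (positions) and `b` (momenta) in a ring satisfying the canonical commutation
relations, normalized as `[b_s, a_t] = δ_{st}` so that `b_s` behaves like `∂/∂a_s`. -/
structure IsCanonicalPair_s5 (a b : ι → A) : Prop where
  commute_position : ∀ s t, Commute (a s) (a t)
  commute_momentum : ∀ s t, Commute (b s) (b t)
  lie_momentum_position : ∀ s t, ⁅b s, a t⁆ = if s = t then 1 else 0

namespace IsCanonicalPair_s5

variable {a b : ι → A}

theorem lie_position_momentum (h : IsCanonicalPair_s5 a b) (s t : ι) :
    ⁅a s, b t⁆ = if s = t then -1 else 0 := by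
  rw [← lie_skew, h.lie_momentum_position]
  split_ifs <;> simp_all

theorem commute_position_momentum (h : IsCanonicalPair_s5 a b) {s t : ι} (hst : s ≠ t) :
    Commute (a s) (b t) := by
  rw [commute_iff_lie_eq, h.lie_position_momentum, if_neg hst]

theorem momentum_mul_position (h : IsCanonicalPair_s5 a b) (s t : ι) :
    b s * a t = a t * b s + if s = t then 1 else 0 := by
  rw [← h.lie_momentum_position, Ring.lie_def, add_sub_cancel]

theorem isVectorOperator_position (h : IsCanonicalPair_s5 a b) :
    IsVectorOperator (angularMomentum a b) a := by
  intro s t u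
  simp [angularMomentum, mul_lie_leibniz, h.lie_momentum_position,
    (h.commute_position _ _).lie_eq]

theorem isVectorOperator_momentum (h : IsCanonicalPair_s5 a b) :
    IsVectorOperator (angularMomentum a b) b := by
  intro s t u
  simp only [angularMomentum, sub_lie, mul_lie_leibniz, h.lie_position_momentum,
    (h.commute_momentum _ _).lie_eq]
  split_ifs <;> simp [neg_add_eq_sub]

section PartialFourier

variable {x d : ι → A} {y e : κ → A}

theorem partialFourier (h : IsCanonicalPair_s5 (Sum.elim x y) (Sum.elim d e)) :
    IsCanonicalPair_s5 (Sum.elim x e) (Sum.elim d (-y)) where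
  commute_position
    | .inl i, .inl j => h.commute_position (.inl i) (.inl j)
    | .inl _, .inr _ => h.commute_position_momentum Sum.inl_ne_inr
    | .inr _, .inl _ => (h.commute_position_momentum Sum.inl_ne_inr).symm
    | .inr i, .inr j => h.commute_momentum (.inr i) (.inr j)
  commute_momentum
    | .inl i, .inl j => h.commute_momentum (.inl i) (.inl j)
    | .inl _, .inr _ => (h.commute_position_momentum Sum.inr_ne_inl).symm.neg_right
    | .inr _, .inl _ => (h.commute_position_momentum Sum.inr_ne_inl).neg_left
    | .inr i, .inr j => (h.commute_position (.inr i) (.inr j)).neg_left.neg_right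
  lie_momentum_position
    | .inl i, .inl j => h.lie_momentum_position (.inl i) (.inl j)
    | .inl i, .inr j => (h.commute_momentum (.inl i) (.inr j)).lie_eq
    | .inr i, .inl j => (h.commute_position (.inr i) (.inl j)).neg_left.lie_eq
    | .inr i, .inr j => by
      have hij := h.lie_momentum_position (.inr j) (.inr i)
      simpa [eq_comm] using hij

theorem angularMomentum_partialFourier_inr_inr
    (h : IsCanonicalPair_s5 (Sum.elim x y) (Sum.elim d e)) (i j : κ) :
    angularMomentum (Sum.elim x e) (Sum.elim d (-y)) (.inr i) (.inr j) =
      -(y j * e i) + y i * e j := by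
  have e_mul_y (i j : κ) : e i * y j = y j * e i + if i = j then 1 else 0 := by
    simpa using h.momentum_mul_position (.inr i) (.inr j)
  simp [angularMomentum, e_mul_y, eq_comm (a := j)]

theorem angularMomentum_partialFourier_inl_inr
    (h : IsCanonicalPair_s5 (Sum.elim x y) (Sum.elim d e)) (i : ι) (j : κ) :
    angularMomentum (Sum.elim x e) (Sum.elim d (-y)) (.inl i) (.inr j) =
      -(x i * y j + d i * e j) := by
  have hde : Commute (d i) (e j) := h.commute_momentum (.inl i) (.inr j)
  simp only [angularMomentum, Sum.elim_inl, Sum.elim_inr, Pi.neg_apply, mul_neg, hde.eq]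
  abel

variable [Fintype ι] [Fintype κ]

theorem commute_angularMomentum_sum_position_sq
    (h : IsCanonicalPair_s5 (Sum.elim x y) (Sum.elim d e)) (s t : ι ⊕ κ) :
    Commute (angularMomentum (Sum.elim x e) (Sum.elim d (-y)) s t)
      (∑ i, x i * x i + ∑ j, e j * e j) := by
  have ha := h.partialFourier.isVectorOperator_position
  simpa using ha.commute_sum_mul ha s t

theorem commute_angularMomentum_sum_momentum_sq
    (h : IsCanonicalPair_s5 (Sum.elim x y) (Sum.elim d e)) (s t : ι ⊕ κ) :
    Commute (angularMomentum (Sum.elim x e) (Sum.elim d (-y)) s t)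
      (∑ i, d i * d i + ∑ j, y j * y j) := by
  have hb := h.partialFourier.isVectorOperator_momentum
  simpa using hb.commute_sum_mul hb s t

theorem commute_angularMomentum_euler_sub_euler
    (h : IsCanonicalPair_s5 (Sum.elim x y) (Sum.elim d e)) (s t : ι ⊕ κ) :
    Commute (angularMomentum (Sum.elim x e) (Sum.elim d (-y)) s t)
      (∑ i, x i * d i - ∑ j, y j * e j) := by
  have e_mul_y (j : κ) : e j * y j = y j * e j + 1 := by
    simpa using h.momentum_mul_position (.inr j) (.inr j)
  have sum_position_mul_momentum :
      ∑ u, Sum.elim x e u * Sum.elim d (-y) u + (Fintype.card κ : A) =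
        ∑ i, x i * d i - ∑ j, y j * e j := by
    simp only [Fintype.sum_sum_type, Sum.elim_inl, Sum.elim_inr, Pi.neg_apply, mul_neg,
      e_mul_y, Finset.sum_add_distrib, Finset.sum_neg_distrib, Finset.sum_const,
      Finset.card_univ, nsmul_eq_mul, mul_one]
    abel
  rw [← sum_position_mul_momentum]
  exact (h.partialFourier.isVectorOperator_position.commute_sum_mul
    h.partialFourier.isVectorOperator_momentum s t).add_right (Nat.commute_cast _ _)

end PartialFourier

end IsCanonicalPair_s5

end CanonicalPairs

section Polynomials

theorem mulLeft_sum_sq {ι R A : Type*} [Fintype ι] [CommSemiring R] [Semiring A] [Algebra R A]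
    (f : ι → A) :
    LinearMap.mulLeft R (∑ i, f i ^ 2) =
      ∑ i, LinearMap.mulLeft R (f i) * LinearMap.mulLeft R (f i) := by
  refine LinearMap.ext fun a => ?_
  simp [Finset.sum_mul, pow_two, mul_assoc]

open MvPolynomial

variable {σ R : Type*} [CommRing R]

theorem lie_pderiv_pderiv (s t : σ) :
    ⁅(pderiv s : Derivation R (MvPolynomial σ R) (MvPolynomial σ R)), pderiv (R := R) t⁆ = 0 := by
  classical
  refine derivation_ext fun u => ?_
  simp [Derivation.commutator_apply, pderiv_X, Pi.single_apply, apply_ite]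

theorem isCanonicalPair_mulLeft_X_pderiv [DecidableEq σ] :
    IsCanonicalPair_s5 (fun s : σ => LinearMap.mulLeft R (X s : MvPolynomial σ R))
      (fun s => (pderiv s).toLinearMap) where
  commute_position s t :=
    LinearMap.ext fun f => mul_left_comm (X s) (X t) f
  commute_momentum s t := by
    rw [commute_iff_lie_eq, ← Derivation.commutator_coe_linear_map, lie_pderiv_pderiv]
    rfl
  lie_momentum_position s t := by
    refine LinearMap.ext fun f => ?_
    rcases eq_or_ne s t with rfl | hst
    · simp [Ring.lie_def]
    · simp [Ring.lie_def, hst, pderiv_X_of_ne hst.symm]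

end Polynomials

noncomputable section PseudoOrthogonal

variable (p q : ℕ)

theorem isCanonicalPair_xop_yop_dx_dy :
    IsCanonicalPair_s5 (Sum.elim (xop p q) (yop p q)) (Sum.elim (dx p q) (dy p q)) := by
  convert isCanonicalPair_mulLeft_X_pderiv (R := ℂ) (σ := Fin p ⊕ Fin q) using 1 <;>
    ext1 (i | j) <;> rfl

/-- The angular momenta of the pair `(x, ∂_y)`, `(∂_x, -y)`. Up to scalars they span
the image of `𝔬(p,q)`. -/
def orthogonalGenerator : Fin p ⊕ Fin q → Fin p ⊕ Fin q → Module.End ℂ (Rpq p q) :=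
  angularMomentum (Sum.elim (xop p q) (dy p q)) (Sum.elim (dx p q) (-yop p q))

theorem orthogonalGenerator_inl_inl (i j : Fin p) :
    orthogonalGenerator p q (.inl i) (.inl j) = -(xop p q j * dx p q i) + xop p q i * dx p q j :=
  sub_eq_neg_add _ _

theorem orthogonalGenerator_inr_inr (i j : Fin q) :
    orthogonalGenerator p q (.inr i) (.inr j) = -(yop p q j * dy p q i) + yop p q i * dy p q j :=
  (isCanonicalPair_xop_yop_dx_dy p q).angularMomentum_partialFourier_inr_inr i j

theorem orthogonalGenerator_inl_inr (i : Fin p) (j : Fin q) :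
    orthogonalGenerator p q (.inl i) (.inr j) = -(xop p q i * yop p q j + dx p q i * dy p q j) :=
  (isCanonicalPair_xop_yop_dx_dy p q).angularMomentum_partialFourier_inl_inr i j

theorem commute_orthogonalGenerator_Hop (s t : Fin p ⊕ Fin q) :
    Commute (orthogonalGenerator p q s t) (Hop p q) := by
  have Hop_eq : Hop p q = -(Eop_x p q - Eop_y p q) + (((q : ℂ) - p) / 2) • 1 := by
    rw [Hop]
    module
  rw [Hop_eq]
  exact ((isCanonicalPair_xop_yop_dx_dy p q).commute_angularMomentum_euler_sub_euler
    s t).neg_right.add_right ((Commute.one_right _).smul_right _)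

theorem commute_orthogonalGenerator_Xplus (s t : Fin p ⊕ Fin q) :
    Commute (orthogonalGenerator p q s t) (Xplus p q) := by
  rw [Xplus, ry2, mulLeft_sum_sq]
  exact ((isCanonicalPair_xop_yop_dx_dy p q).commute_angularMomentum_sum_momentum_sq
    s t).smul_right _

theorem commute_orthogonalGenerator_Xminus (s t : Fin p ⊕ Fin q) :
    Commute (orthogonalGenerator p q s t) (Xminus p q) := by
  rw [Xminus, rx2, mulLeft_sum_sq]
  exact ((isCanonicalPair_xop_yop_dx_dy p q).commute_angularMomentum_sum_position_sq
    s t).smul_right _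

theorem commute_orthogonalGenerator_sl2_triple (s t : Fin p ⊕ Fin q) :
    Commute (orthogonalGenerator p q s t) (Hop p q) ∧
    Commute (orthogonalGenerator p q s t) (Xplus p q) ∧
    Commute (orthogonalGenerator p q s t) (Xminus p q) :=
  ⟨commute_orthogonalGenerator_Hop p q s t, commute_orthogonalGenerator_Xplus p q s t,
    commute_orthogonalGenerator_Xminus p q s t⟩

end PseudoOrthogonal

theorem stmt_5 (p q : ℕ) (hp : 1 ≤ p) (hq : 1 ≤ q) :
    (∀ i j : Fin p,
      Commute (-(xop p q j * dx p q i) + xop p q i * dx p q j) (Hop p q) ∧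
      Commute (-(xop p q j * dx p q i) + xop p q i * dx p q j) (Xplus p q) ∧
      Commute (-(xop p q j * dx p q i) + xop p q i * dx p q j) (Xminus p q)) ∧
    (∀ i j : Fin q,
      Commute (-(yop p q j * dy p q i) + yop p q i * dy p q j) (Hop p q) ∧
      Commute (-(yop p q j * dy p q i) + yop p q i * dy p q j) (Xplus p q) ∧
      Commute (-(yop p q j * dy p q i) + yop p q i * dy p q j) (Xminus p q)) ∧
    (∀ (i : Fin p) (j : Fin q),
      Commute (Complex.I • (xop p q i * yop p q j + dx p q i * dy p q j)) (Hop p q) ∧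
      Commute (Complex.I • (xop p q i * yop p q j + dx p q i * dy p q j)) (Xplus p q) ∧
      Commute (Complex.I • (xop p q i * yop p q j + dx p q i * dy p q j)) (Xminus p q)) := by
  refine ⟨fun i j => ?_, fun i j => ?_, fun i j => ?_⟩
  · rw [← orthogonalGenerator_inl_inl]
    exact commute_orthogonalGenerator_sl2_triple p q (.inl i) (.inl j)
  · rw [← orthogonalGenerator_inr_inr]
    exact commute_orthogonalGenerator_sl2_triple p q (.inr i) (.inr j)
  · have hI : Complex.I • (xop p q i * yop p q j + dx p q i * dy p q j) =
        -Complex.I • orthogonalGenerator p q (.inl i) (.inr j) := by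
      rw [orthogonalGenerator_inl_inr, neg_smul_neg]
    obtain ⟨hH, hXplus, hXminus⟩ := commute_orthogonalGenerator_sl2_triple p q (.inl i) (.inr j)
    rw [hI]
    exact ⟨hH.smul_left _, hXplus.smul_left _, hXminus.smul_left _⟩
end

section
/- Let n ≥ 1, let h be a polynomial on ℝⁿ that is homogeneous of degree d and harmonic (Σ_{i=1}^n ∂²h/∂x_i² = 0), and let φ : ℝ → ℂ be twice continuously differentiable. Then for every x ∈ ℝⁿ, Δ( h·(φ∘r²) )(x) = (4d + 2n)·h(x)·φ'(‖x‖²) + 4‖x‖²·h(x)·φ''(‖x‖²), where Δ = Σ_{i=1}^n ∂²/∂x_i² is the Laplacian (sum of second partial derivatives) and r²(x) = ‖x‖² = Σ_i x_i². -/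
/-- The Laplacian `Δf = Σ_{i=1}^n ∂²f/∂x_i²` of a function `f : ℝⁿ → ℂ`, as the sum of
second partial derivatives in the coordinate directions. -/
noncomputable def lap (n : ℕ) (f : EuclideanSpace ℝ (Fin n) → ℂ)
    (x : EuclideanSpace ℝ (Fin n)) : ℂ :=
  ∑ i : Fin n,
    fderiv ℝ (fun y => fderiv ℝ f y (EuclideanSpace.single i 1)) x (EuclideanSpace.single i 1)

/-!
The functions `p · (φ ∘ r²)` with `p` a polynomial are, up to sums, stable under partial
derivatives: `∂ᵢ (p · φ ∘ r²) = ∂ᵢp · φ ∘ r² + 2 xᵢ p · φ' ∘ r²`. Applying this rule twice and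
summing over `i` gives
`Δ (p · φ ∘ r²) = Δp · φ ∘ r² + (4 ∑ᵢ xᵢ ∂ᵢp + 2 n p) · φ' ∘ r² + 4 r² p · φ'' ∘ r²`.
Harmonicity kills the first term and Euler's identity evaluates `∑ᵢ xᵢ ∂ᵢp` as `d p`.
-/

open MvPolynomial Filter Topology

section PolynomialDerivative

variable {𝕜 ι : Type*} [NontriviallyNormedField 𝕜] [Fintype ι]

theorem hasFDerivAt_mvPolynomial_eval (p : MvPolynomial ι 𝕜) (x : ι → 𝕜) :
    HasFDerivAt (fun y => eval y p)
      (∑ i, eval x (pderiv i p) • (ContinuousLinearMap.proj i : (ι → 𝕜) →L[𝕜] 𝕜)) x := by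
  classical
  induction p using MvPolynomial.induction_on with
  | C a =>
    simp only [eval_C]
    refine (hasFDerivAt_const a x).congr_fderiv ?_
    ext v
    simp
  | add p q hp hq =>
    simp only [map_add]
    refine (hp.fun_add hq).congr_fderiv ?_
    ext v
    simp [add_mul, Finset.sum_add_distrib]
  | mul_X p j hp =>
    simp only [map_mul, eval_X]
    refine (hp.mul (hasFDerivAt_apply j x)).congr_fderiv ?_
    ext v
    simp [Derivation.leibniz, pderiv_X, Pi.single_apply, apply_ite, add_mul,
      Finset.sum_add_distrib, Finset.mul_sum, mul_assoc]

theorem hasFDerivAt_eval_euclideanSpace (p : MvPolynomial ι ℝ) (x : EuclideanSpace ℝ ι) :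
    HasFDerivAt (fun y : EuclideanSpace ℝ ι => eval (fun i => y i) p)
      (∑ i, eval (fun i => x i) (pderiv i p) •
        (EuclideanSpace.proj i : EuclideanSpace ℝ ι →L[ℝ] ℝ)) x :=
  ((hasFDerivAt_mvPolynomial_eval p x.ofLp).comp (f := WithLp.ofLp) x
    (PiLp.hasFDerivAt_ofLp 2 x)).congr_fderiv (by ext; simp)

end PolynomialDerivative

theorem hasFDerivAt_comp_norm_sq {E F : Type*} [NormedAddCommGroup E] [InnerProductSpace ℝ E]
    [NormedAddCommGroup F] [NormedSpace ℝ F] {φ : ℝ → F} {x : E}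
    (hφ : DifferentiableAt ℝ φ (‖x‖ ^ 2)) :
    HasFDerivAt (fun y => φ (‖y‖ ^ 2))
      ((2 • innerSL ℝ x).smulRight (deriv φ (‖x‖ ^ 2))) x :=
  (hφ.hasDerivAt.hasFDerivAt.comp x (hasStrictFDerivAt_norm_sq x).hasFDerivAt).congr_fderiv
    (by ext; simp [mul_smul, ofNat_smul_eq_nsmul])

section PolyMulRadial

variable {ι F : Type*} [Fintype ι] [NormedAddCommGroup F] [NormedSpace ℝ F]

/-- The product `p · (φ ∘ r²)` of a polynomial function and a radial function on Euclidean space,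
the radial profile `φ` being a function of `r² = ‖x‖²`. -/
noncomputable def polyMulRadial (p : MvPolynomial ι ℝ) (φ : ℝ → F) (x : EuclideanSpace ℝ ι) : F :=
  eval (fun i => x i) p • φ (‖x‖ ^ 2)

theorem polyMulRadial_complex (p : MvPolynomial ι ℝ) (φ : ℝ → ℂ) :
    polyMulRadial p φ = fun x => ((eval (fun i => x i) p : ℝ) : ℂ) * φ (‖x‖ ^ 2) := by
  funext x
  rw [polyMulRadial, Complex.real_smul]

theorem polyMulRadial_zero (φ : ℝ → F) (x : EuclideanSpace ℝ ι) :
    polyMulRadial 0 φ x = 0 := by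
  simp [polyMulRadial]

theorem polyMulRadial_sum {κ : Type*} (s : Finset κ) (p : κ → MvPolynomial ι ℝ) (φ : ℝ → F)
    (x : EuclideanSpace ℝ ι) :
    polyMulRadial (∑ k ∈ s, p k) φ x = ∑ k ∈ s, polyMulRadial (p k) φ x := by
  simp [polyMulRadial, Finset.sum_smul]

theorem hasFDerivAt_polyMulRadial (p : MvPolynomial ι ℝ) {φ : ℝ → F} {x : EuclideanSpace ℝ ι}
    (hφ : DifferentiableAt ℝ φ (‖x‖ ^ 2)) :
    HasFDerivAt (polyMulRadial p φ)
      (eval (fun i => x i) p • (2 • innerSL ℝ x).smulRight (deriv φ (‖x‖ ^ 2)) +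
        (∑ i, eval (fun i => x i) (pderiv i p) •
          (EuclideanSpace.proj i : EuclideanSpace ℝ ι →L[ℝ] ℝ)).smulRight (φ (‖x‖ ^ 2))) x :=
  (hasFDerivAt_eval_euclideanSpace p x).smul (hasFDerivAt_comp_norm_sq hφ)

variable [DecidableEq ι]

theorem fderiv_polyMulRadial_single (p : MvPolynomial ι ℝ) {φ : ℝ → F}
    {x : EuclideanSpace ℝ ι} (hφ : DifferentiableAt ℝ φ (‖x‖ ^ 2)) (i : ι) :
    fderiv ℝ (polyMulRadial p φ) x (EuclideanSpace.single i 1) =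
      polyMulRadial (pderiv i p) φ x + polyMulRadial (2 • (X i * p)) (deriv φ) x := by
  have poly_part : (∑ j, eval (fun j => x j) (pderiv j p) •
      (EuclideanSpace.proj j : EuclideanSpace ℝ ι →L[ℝ] ℝ)) (EuclideanSpace.single i 1) =
      eval (fun j => x j) (pderiv i p) := by
    simp
  have radial_part : innerSL ℝ x (EuclideanSpace.single i 1) = x i := by
    simp [EuclideanSpace.inner_single_right]
  rw [(hasFDerivAt_polyMulRadial p hφ).fderiv]
  simp only [add_apply, smul_apply, ContinuousLinearMap.smulRight_apply, poly_part, radial_part,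
    polyMulRadial, map_nsmul, map_mul, eval_X]
  module

theorem fderiv_fderiv_polyMulRadial_single (p : MvPolynomial ι ℝ) {φ : ℝ → F}
    {x : EuclideanSpace ℝ ι} (hφ : ∀ᶠ t in 𝓝 (‖x‖ ^ 2), DifferentiableAt ℝ φ t)
    (hφ' : DifferentiableAt ℝ (deriv φ) (‖x‖ ^ 2)) (i : ι) :
    fderiv ℝ (fun y => fderiv ℝ (polyMulRadial p φ) y (EuclideanSpace.single i 1)) x
        (EuclideanSpace.single i 1) =
      polyMulRadial (pderiv i (pderiv i p)) φ x +
        polyMulRadial (4 • (X i * pderiv i p) + 2 • p) (deriv φ) x +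
        polyMulRadial (4 • (X i ^ 2 * p)) (deriv (deriv φ)) x := by
  have first_order : (fun y => fderiv ℝ (polyMulRadial p φ) y (EuclideanSpace.single i 1)) =ᶠ[𝓝 x]
      polyMulRadial (pderiv i p) φ + polyMulRadial (2 • (X i * p)) (deriv φ) := by
    have norm_sq_tendsto : Tendsto (fun y : EuclideanSpace ℝ ι => ‖y‖ ^ 2) (𝓝 x) (𝓝 (‖x‖ ^ 2)) :=
      (continuous_norm.pow 2).tendsto x
    filter_upwards [norm_sq_tendsto.eventually hφ] with y hy
    exact fderiv_polyMulRadial_single p hy i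
  have pderiv_two_X_mul : pderiv i (2 • (X i * p)) = 2 • p + 2 • (X i * pderiv i p) := by
    rw [map_nsmul, pderiv_mul, pderiv_X_self, one_mul, smul_add]
  rw [first_order.fderiv_eq,
    fderiv_add (hasFDerivAt_polyMulRadial _ hφ.self_of_nhds).differentiableAt
      (hasFDerivAt_polyMulRadial _ hφ').differentiableAt,
    add_apply, fderiv_polyMulRadial_single _ hφ.self_of_nhds,
    fderiv_polyMulRadial_single _ hφ', pderiv_two_X_mul]
  simp only [polyMulRadial, map_add, map_mul, map_nsmul, map_pow, eval_X]
  module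

end PolyMulRadial

theorem lap_polyMulRadial {n : ℕ} (p : MvPolynomial (Fin n) ℝ) {φ : ℝ → ℂ}
    {x : EuclideanSpace ℝ (Fin n)} (hφ : ∀ᶠ t in 𝓝 (‖x‖ ^ 2), DifferentiableAt ℝ φ t)
    (hφ' : DifferentiableAt ℝ (deriv φ) (‖x‖ ^ 2)) :
    lap n (polyMulRadial p φ) x =
      polyMulRadial (∑ i, pderiv i (pderiv i p)) φ x +
        polyMulRadial (4 • ∑ i, X i * pderiv i p + (2 * n) • p) (deriv φ) x +
        polyMulRadial (4 • ((∑ i, X i ^ 2) * p)) (deriv (deriv φ)) x := by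
  have first_order_coeff : 4 • ∑ i, X i * pderiv i p + (2 * n) • p =
      ∑ i, (4 • (X i * pderiv i p) + 2 • p) := by
    rw [Finset.sum_add_distrib, ← Finset.smul_sum, Finset.sum_const, Finset.card_fin, smul_smul,
      mul_comm]
  have second_order_coeff : 4 • ((∑ i, X i ^ 2) * p) = ∑ i, 4 • (X i ^ 2 * p) := by
    rw [Finset.sum_mul, Finset.smul_sum]
  rw [first_order_coeff, second_order_coeff]
  simp only [lap, fderiv_fderiv_polyMulRadial_single p hφ hφ', polyMulRadial_sum]
  rw [Finset.sum_add_distrib, Finset.sum_add_distrib]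

theorem stmt_7_general (n d : ℕ) (h : MvPolynomial (Fin n) ℝ) (hhom : h.IsHomogeneous d)
    (hharm : ∑ i : Fin n, pderiv i (pderiv i h) = 0) (φ : ℝ → ℂ) (x : EuclideanSpace ℝ (Fin n))
    (hφ : ∀ᶠ t in 𝓝 (‖x‖ ^ 2), DifferentiableAt ℝ φ t)
    (hφ' : DifferentiableAt ℝ (deriv φ) (‖x‖ ^ 2)) :
    lap n (fun y => ((eval (fun i => y i) h : ℝ) : ℂ) * φ (‖y‖ ^ 2)) x =
      ((4 * d + 2 * n : ℕ) : ℂ) * ((eval (fun i => x i) h : ℝ) : ℂ) * deriv φ (‖x‖ ^ 2)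
        + 4 * ((‖x‖ ^ 2 : ℝ) : ℂ) * ((eval (fun i => x i) h : ℝ) : ℂ)
          * deriv (deriv φ) (‖x‖ ^ 2) := by
  rw [← polyMulRadial_complex, lap_polyMulRadial h hφ hφ', hharm, hhom.sum_X_mul_pderiv,
    smul_smul, ← add_smul, polyMulRadial_zero, zero_add]
  simp [polyMulRadial_complex, EuclideanSpace.real_norm_sq_eq, mul_assoc]

theorem stmt_7 (n d : ℕ) (hn : 1 ≤ n) (h : MvPolynomial (Fin n) ℝ)
    (hhom : h.IsHomogeneous d)
    (hharm : ∑ i : Fin n, MvPolynomial.pderiv i (MvPolynomial.pderiv i h) = 0)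
    (φ : ℝ → ℂ) (hφ : ContDiff ℝ 2 φ) (x : EuclideanSpace ℝ (Fin n)) :
    lap n (fun y => ((MvPolynomial.eval (fun i => y i) h : ℝ) : ℂ) * φ (‖y‖ ^ 2)) x =
      ((4 * d + 2 * n : ℕ) : ℂ) * ((MvPolynomial.eval (fun i => x i) h : ℝ) : ℂ)
          * deriv φ (‖x‖ ^ 2)
        + 4 * ((‖x‖ ^ 2 : ℝ) : ℂ) * ((MvPolynomial.eval (fun i => x i) h : ℝ) : ℂ)
          * deriv (deriv φ) (‖x‖ ^ 2) :=
  stmt_7_general n d h hhom hharm φ x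
    (.of_forall (hφ.differentiable two_ne_zero)) (hφ.differentiable_deriv_two _)
end

section
/- Let h₁ be a harmonic polynomial on ℝ^p homogeneous of degree k, let h₂ be a harmonic polynomial on ℝ^q homogeneous of degree l, set κ₊ = k + p/2 and κ₋ = l + q/2, and let μ ∈ ℕ. Then the smooth function f(x,y) = h₁(x)·h₂(y)·ρ_y^μ·Ψ_{κ₊}(ρ_x ρ_y) on ℝ^p × ℝ^q satisfies H f = (−κ₊ + κ₋ + 2μ)·f and X⁺ f = 0 everywhere; i.e. f is a highest weight vector of weight λ = −κ₊ + κ₋ + 2μ for the 𝔰𝔩₂-action. -/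
noncomputable section

/-- Points `(x, y) ∈ ℝ^p × ℝ^q`. -/
abbrev Pt (p q : ℕ) := (Fin p → ℝ) × (Fin q → ℝ)

/-- The partial derivative `∂_{x_i}` of a function on `ℝ^p × ℝ^q`. -/
def pdx (p q : ℕ) (i : Fin p) (f : Pt p q → ℂ) : Pt p q → ℂ :=
  fun z => fderiv ℝ f z ((Pi.single i 1 : Fin p → ℝ), (0 : Fin q → ℝ))

/-- The partial derivative `∂_{y_j}` of a function on `ℝ^p × ℝ^q`. -/
def pdy (p q : ℕ) (j : Fin q) (f : Pt p q → ℂ) : Pt p q → ℂ :=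
  fun z => fderiv ℝ f z ((0 : Fin p → ℝ), (Pi.single j 1 : Fin q → ℝ))

/-- `ρ_x = r_x²/2 = (Σ_i x_i²)/2`. -/
def rhox (p q : ℕ) (z : Pt p q) : ℝ := (∑ i, z.1 i ^ 2) / 2

/-- `ρ_y = r_y²/2 = (Σ_j y_j²)/2`. -/
def rhoy (p q : ℕ) (z : Pt p q) : ℝ := (∑ j, z.2 j ^ 2) / 2

/-- The operator `H = −E_x − p/2 + E_y + q/2`. -/
def HOp (p q : ℕ) (f : Pt p q → ℂ) : Pt p q → ℂ := fun z =>
  -(∑ i, ((z.1 i : ℝ) : ℂ) * pdx p q i f z) - ((p : ℂ) / 2) * f z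
    + (∑ j, ((z.2 j : ℝ) : ℂ) * pdy p q j f z) + ((q : ℂ) / 2) * f z

/-- The operator `X⁺ = −(1/2)(Δ_x + r_y²)`. -/
def XpOp (p q : ℕ) (f : Pt p q → ℂ) : Pt p q → ℂ := fun z =>
  -(1 / 2 : ℂ) * ((∑ i, pdx p q i (pdx p q i f) z) + (((∑ j, z.2 j ^ 2 : ℝ)) : ℂ) * f z)

/-- The operator `X⁻ = (1/2)(r_x² + Δ_y)`. -/
def XmOp (p q : ℕ) (f : Pt p q → ℂ) : Pt p q → ℂ := fun z =>
  (1 / 2 : ℂ) * ((((∑ i, z.1 i ^ 2 : ℝ)) : ℂ) * f z + ∑ j, pdy p q j (pdy p q j f) z)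

/-- Rising factorial `(α)ₙ = α(α+1)⋯(α+n−1)` for a complex number `α`. -/
def rising (α : ℂ) : ℕ → ℂ
  | 0 => 1
  | n + 1 => rising α n * (α + n)

/-- Falling factorial `⟨β⟩ₙ = β(β−1)⋯(β−n+1)` for a complex number `β`. -/
def falling (β : ℂ) : ℕ → ℂ
  | 0 => 1
  | n + 1 => falling β n * (β - n)

/-- `Ψ_α(u) = Σ_{n=0}^∞ ((−1)ⁿ/(n!·(α)ₙ))·uⁿ`. -/
def Psi (α : ℂ) (u : ℂ) : ℂ :=
  ∑' n : ℕ, ((-1) ^ n / ((n.factorial : ℂ) * rising α n)) * u ^ n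

/-- `ψ_α(x,y) = Ψ_α(ρ_x ρ_y)`. -/
def psiF (p q : ℕ) (α : ℂ) (z : Pt p q) : ℂ :=
  Psi α (((rhox p q z * rhoy p q z : ℝ)) : ℂ)

end

/-!
Put `κ = κ₊`. The power series `Ψ_κ` solves `u Ψ'' + κ Ψ' + Ψ = 0`. For a harmonic function `a` on
`ℝ^p`, homogeneous of degree `k`, and a radial factor `φ(ρ_x)`,
`Δ(a φ(ρ_x)) = 2 a (ρ_x φ'' + (k + p/2) φ')`. Freezing `y` and taking `φ(t) = Ψ_κ(t ρ_y)`, the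
differential equation turns the right-hand side into `-2 ρ_y a φ = -r_y² a φ`, so `X⁺` kills `f`.

Up to the constant `(q - p)/2`, `H` is the derivative along the vector field `(-x, y)`, whose flow
`(e⁻ᵗ x, eᵗ y)` preserves `ρ_x ρ_y`. Hence `H` sees only the degrees of the homogeneous factors.
-/

section EntirePowerSeries

variable {c : ℕ → ℂ}

theorem norm_mul_pow_le_of_mem_ball {R : ℝ} {w : ℂ} (hw : w ∈ Metric.ball 0 R) (n : ℕ) :
    ‖c n * w ^ n‖ ≤ ‖c n * (R : ℂ) ^ n‖ := by
  have hwR : ‖w‖ ≤ ‖(R : ℂ)‖ := by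
    rw [Complex.norm_real]
    exact (mem_ball_zero_iff.1 hw).le.trans (le_abs_self R)
  simp only [norm_mul, norm_pow]
  gcongr

theorem differentiable_tsum_mul_pow (hc : ∀ u : ℂ, Summable fun n => c n * u ^ n) :
    Differentiable ℂ fun u => ∑' n, c n * u ^ n := by
  intro u
  have hu : u ∈ Metric.ball (0 : ℂ) (‖u‖ + 1) := by simp
  exact (Complex.differentiableOn_tsum_of_summable_norm (hc (‖u‖ + 1 : ℝ)).norm
    (fun n => by fun_prop) Metric.isOpen_ball
    (fun n w hw => norm_mul_pow_le_of_mem_ball hw n)).differentiableAt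
    (Metric.isOpen_ball.mem_nhds hu)

theorem hasSum_deriv_tsum_mul_pow (hc : ∀ u : ℂ, Summable fun n => c n * u ^ n) (u : ℂ) :
    HasSum (fun n : ℕ => (n + 1) * c (n + 1) * u ^ n) (deriv (fun w => ∑' n, c n * w ^ n) u) := by
  have hu : u ∈ Metric.ball (0 : ℂ) (‖u‖ + 1) := by simp
  have termwise := Complex.hasSum_deriv_of_summable_norm (hc (‖u‖ + 1 : ℝ)).norm
    (fun n => by fun_prop) Metric.isOpen_ball
    (fun n w hw => norm_mul_pow_le_of_mem_ball hw n) hu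
  rw [← hasSum_nat_add_iff' 1] at termwise
  convert! termwise using 1
  · ext n
    simp only [deriv_const_mul_field, deriv_pow_field, Nat.cast_succ, Nat.add_sub_cancel]
    ring
  · simp

end EntirePowerSeries

section Psi

variable {α : ℂ}

theorem rising_ne_zero (hα : ∀ n : ℕ, α + n ≠ 0) (n : ℕ) : rising α n ≠ 0 := by
  induction n with
  | zero => exact one_ne_zero
  | succ n ih => exact mul_ne_zero ih (hα n)

/-- The coefficient of `uⁿ` in `Ψ_α(u)`. -/
noncomputable def psiCoeff (α : ℂ) (n : ℕ) : ℂ := (-1) ^ n / ((n.factorial : ℂ) * rising α n)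

theorem psiCoeff_succ (hα : ∀ n : ℕ, α + n ≠ 0) (n : ℕ) :
    (n + 1) * (α + n) * psiCoeff α (n + 1) = -psiCoeff α n := by
  have hrising := rising_ne_zero hα n
  have hfactor := hα n
  have hfactorial : (n.factorial : ℂ) ≠ 0 := mod_cast n.factorial_ne_zero
  have hsucc : (n : ℂ) + 1 ≠ 0 := mod_cast n.succ_ne_zero
  simp only [psiCoeff, rising, Nat.factorial_succ, Nat.cast_mul, Nat.cast_succ, pow_succ]
  field_simp

theorem summable_psiCoeff_mul_pow (hα : ∀ n : ℕ, α + n ≠ 0) (u : ℂ) :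
    Summable fun n => psiCoeff α n * u ^ n := by
  refine summable_of_ratio_norm_eventually_le (r := 1 / 2) (by norm_num) ?_
  filter_upwards [tendsto_natCast_atTop_atTop.eventually_ge_atTop (‖α‖ + 2 * ‖u‖)] with n hn
  have hlarge : 2 * ‖u‖ ≤ ‖((n : ℂ) + 1) * (α + n)‖ := by
    have hsucc : 1 ≤ ‖(n : ℂ) + 1‖ := by
      rw [← Nat.cast_succ, Complex.norm_natCast]
      exact_mod_cast n.succ_pos
    have hshift : 2 * ‖u‖ ≤ ‖α + n‖ := by
      have := norm_sub_le_norm_add (n : ℂ) α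
      rw [Complex.norm_natCast, add_comm] at this
      linarith
    rw [norm_mul]
    nlinarith [norm_nonneg u]
  have hrec : ‖psiCoeff α n‖ = ‖((n : ℂ) + 1) * (α + n)‖ * ‖psiCoeff α (n + 1)‖ := by
    rw [← norm_neg, ← psiCoeff_succ hα, norm_mul]
  calc ‖psiCoeff α (n + 1) * u ^ (n + 1)‖
      = 1 / 2 * (2 * ‖u‖ * (‖psiCoeff α (n + 1)‖ * ‖u‖ ^ n)) := by
        rw [norm_mul, norm_pow]; ring
    _ ≤ 1 / 2 * (‖((n : ℂ) + 1) * (α + n)‖ * (‖psiCoeff α (n + 1)‖ * ‖u‖ ^ n)) := by gcongr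
    _ = 1 / 2 * ‖psiCoeff α n * u ^ n‖ := by
        rw [norm_mul (psiCoeff α n), norm_pow, hrec]; ring

theorem differentiable_Psi (hα : ∀ n : ℕ, α + n ≠ 0) : Differentiable ℂ (Psi α) :=
  differentiable_tsum_mul_pow (summable_psiCoeff_mul_pow hα)

theorem hasSum_deriv_Psi (hα : ∀ n : ℕ, α + n ≠ 0) (u : ℂ) :
    HasSum (fun n : ℕ => (n + 1) * psiCoeff α (n + 1) * u ^ n) (deriv (Psi α) u) :=
  hasSum_deriv_tsum_mul_pow (summable_psiCoeff_mul_pow hα) u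

theorem hasSum_mul_deriv_deriv_Psi (hα : ∀ n : ℕ, α + n ≠ 0) (u : ℂ) :
    HasSum (fun n : ℕ => n * ((n + 1) * psiCoeff α (n + 1)) * u ^ n)
      (u * deriv (deriv (Psi α)) u) := by
  have hderiv : deriv (Psi α) = fun w => ∑' n : ℕ, (n + 1) * psiCoeff α (n + 1) * w ^ n :=
    funext fun w => (hasSum_deriv_Psi hα w).tsum_eq.symm
  have hshifted := (hasSum_deriv_tsum_mul_pow
    (fun w => (hasSum_deriv_Psi hα w).summable) u).mul_left u
  rw [← hderiv] at hshifted
  rw [← hasSum_nat_add_iff' 1]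
  convert! hshifted using 1
  · ext n
    push_cast
    ring
  · simp

theorem mul_deriv_deriv_Psi_add (hα : ∀ n : ℕ, α + n ≠ 0) (u : ℂ) :
    u * deriv (deriv (Psi α)) u + α * deriv (Psi α) u = -Psi α u := by
  refine ((hasSum_mul_deriv_deriv_Psi hα u).add
    ((hasSum_deriv_Psi hα u).mul_left α)).unique ?_
  convert! (summable_psiCoeff_mul_pow hα u).hasSum.neg using 2 with n
  linear_combination u ^ n * psiCoeff_succ hα n

end Psi

section Homogeneous

variable {E : Type*} [AddCommGroup E] [Module ℝ E] {a b : E → ℂ} {k l : ℂ}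

/-- `a` is positively homogeneous of degree `k`: `a (t x) = tᵏ a x` for real `t > 0`. -/
def IsPosHomogeneous (k : ℂ) (a : E → ℂ) : Prop :=
  ∀ t : ℝ, 0 < t → ∀ x, a (t • x) = (t : ℂ) ^ k * a x

theorem IsPosHomogeneous.mul (ha : IsPosHomogeneous k a) (hb : IsPosHomogeneous l b) :
    IsPosHomogeneous (k + l) fun x => a x * b x := by
  intro t ht x
  simp only [ha t ht, hb t ht, Complex.cpow_add _ _ (Complex.ofReal_ne_zero.2 ht.ne')]
  ring

theorem IsPosHomogeneous.apply_exp_smul (ha : IsPosHomogeneous k a) (t : ℝ) (x : E) :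
    a (Real.exp t • x) = Complex.exp (k * t) * a x := by
  rw [ha _ (Real.exp_pos t), Complex.cpow_def_of_ne_zero (by simp), ← Complex.ofReal_log
    (Real.exp_pos t).le, Real.log_exp, mul_comm k]

end Homogeneous

theorem hasDerivAt_exp_mul_zero (c : ℂ) :
    HasDerivAt (fun t : ℝ => Complex.exp (c * t)) c 0 := by
  simpa using ((hasDerivAt_id (0 : ℂ)).const_mul c).cexp.comp_ofReal

theorem IsPosHomogeneous.fderiv_apply_self {E : Type*} [NormedAddCommGroup E] [NormedSpace ℝ E]
    {a : E → ℂ} {k : ℂ} {x : E} (ha : IsPosHomogeneous k a) (hdiff : DifferentiableAt ℝ a x) :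
    fderiv ℝ a x x = k * a x := by
  have hray : HasDerivAt (fun t : ℝ => Real.exp t • x) x 0 := by
    simpa using (Real.hasDerivAt_exp 0).smul_const x
  have hchain : HasDerivAt (fun t : ℝ => a (Real.exp t • x)) (fderiv ℝ a x x) 0 :=
    HasFDerivAt.comp_hasDerivAt 0 (by simpa using hdiff.hasFDerivAt) hray
  simp only [ha.apply_exp_smul] at hchain
  exact hchain.unique ((hasDerivAt_exp_mul_zero k).mul_const (a x))

section Laplacian

variable {ι : Type*} [Fintype ι]

/-- The function `ρ = r² / 2` on `ℝ^ι`. -/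
noncomputable def halfSumSq (x : ι → ℝ) : ℝ := (∑ i, x i ^ 2) / 2

theorem ofReal_sum_sq (x : ι → ℝ) : ((∑ i, x i ^ 2 : ℝ) : ℂ) = 2 * halfSumSq x := by
  simp [halfSumSq, mul_div_cancel₀]

theorem halfSumSq_smul (t : ℝ) (x : ι → ℝ) : halfSumSq (t • x) = t ^ 2 * halfSumSq x := by
  simp [halfSumSq, mul_pow, ← Finset.mul_sum, mul_div_assoc]

theorem isPosHomogeneous_ofReal_halfSumSq_pow (m : ℕ) :
    IsPosHomogeneous (2 * m) fun x : ι → ℝ => (halfSumSq x : ℂ) ^ m := by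
  intro t _ x
  have hcpow : (t : ℂ) ^ (2 * m : ℂ) = (t ^ 2) ^ m := by
    rw [← pow_mul]
    exact_mod_cast Complex.cpow_natCast t (2 * m)
  simp [halfSumSq_smul, mul_pow, hcpow]

theorem contDiff_halfSumSq {n : WithTop ℕ∞} : ContDiff ℝ n (halfSumSq (ι := ι)) := by
  unfold halfSumSq
  fun_prop

theorem contDiff_ofReal_halfSumSq {n : WithTop ℕ∞} :
    ContDiff ℝ n fun x : ι → ℝ => (halfSumSq x : ℂ) :=
  Complex.ofRealCLM.contDiff.comp contDiff_halfSumSq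

theorem hasFDerivAt_halfSumSq (x : ι → ℝ) :
    HasFDerivAt halfSumSq (∑ i, x i • ContinuousLinearMap.proj (R := ℝ) (φ := fun _ => ℝ) i) x := by
  have hsum := HasFDerivAt.fun_sum (u := Finset.univ) fun i _ =>
    (hasFDerivAt_apply (𝕜 := ℝ) (F' := fun _ : ι => ℝ) i x).pow 2
  refine (hsum.mul_const (2 : ℝ)⁻¹).congr_fderiv ?_
  simp [Finset.smul_sum, smul_smul]

variable [DecidableEq ι]

theorem sum_mul_apply_single (L : (ι → ℝ) →L[ℝ] ℂ) (v : ι → ℝ) :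
    ∑ i, v i * L (Pi.single i 1) = L v := by
  conv_rhs => rw [pi_eq_sum_univ' v, map_sum]
  simp

/-- The partial derivative `∂ᵢ g` of a function on `ℝ^ι`. -/
noncomputable def partialDeriv (i : ι) (g : (ι → ℝ) → ℂ) (x : ι → ℝ) : ℂ :=
  fderiv ℝ g x (Pi.single i 1)

/-- The Laplacian `∑ᵢ ∂ᵢ²` of a function on `ℝ^ι`. -/
noncomputable def coordLaplacian (g : (ι → ℝ) → ℂ) (x : ι → ℝ) : ℂ :=
  ∑ i, partialDeriv i (partialDeriv i g) x

variable {a g : (ι → ℝ) → ℂ} {φ : ℝ → ℂ} {x : ι → ℝ} {i : ι}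

theorem differentiable_partialDeriv (hg : ContDiff ℝ 2 g) :
    Differentiable ℝ (partialDeriv i g) :=
  ((hg.fderiv_right (m := 1) (by norm_num)).clm_apply contDiff_const).differentiable one_ne_zero

theorem partialDeriv_add (ha : DifferentiableAt ℝ a x) (hg : DifferentiableAt ℝ g x) :
    partialDeriv i (fun w => a w + g w) x = partialDeriv i a x + partialDeriv i g x := by
  simp [partialDeriv, fderiv_fun_add ha hg]

theorem partialDeriv_mul (ha : DifferentiableAt ℝ a x) (hg : DifferentiableAt ℝ g x) :
    partialDeriv i (fun w => a w * g w) x =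
      a x * partialDeriv i g x + g x * partialDeriv i a x := by
  simp [partialDeriv, fderiv_fun_mul ha hg]

theorem partialDeriv_coord (i j : ι) (x : ι → ℝ) :
    partialDeriv i (fun w => (w j : ℂ)) x = (Pi.single i 1 : ι → ℝ) j := by
  have h : HasFDerivAt (fun w : ι → ℝ => (w j : ℂ)) _ x :=
    Complex.ofRealCLM.hasFDerivAt.comp x (hasFDerivAt_apply j x)
  simp [partialDeriv, h.fderiv]

theorem partialDeriv_comp_halfSumSq (hφ : DifferentiableAt ℝ φ (halfSumSq x)) :
    partialDeriv i (fun w => φ (halfSumSq w)) x = x i * deriv φ (halfSumSq x) := by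
  have hcomp : HasFDerivAt (fun w => φ (halfSumSq w)) _ x :=
    hφ.hasFDerivAt.comp x (hasFDerivAt_halfSumSq x)
  rw [partialDeriv, hcomp.fderiv]
  simp [Pi.single_apply]

theorem coordLaplacian_mul (ha : ContDiff ℝ 2 a) (hg : ContDiff ℝ 2 g) :
    coordLaplacian (fun w => a w * g w) x =
      a x * coordLaplacian g x + 2 * (∑ i, partialDeriv i a x * partialDeriv i g x) +
        g x * coordLaplacian a x := by
  have hda := ha.differentiable two_ne_zero
  have hdg := hg.differentiable two_ne_zero
  have hderiv (i : ι) : partialDeriv i (fun w => a w * g w) =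
      fun w => a w * partialDeriv i g w + g w * partialDeriv i a w :=
    funext fun w => partialDeriv_mul (hda w) (hdg w)
  have hterm (i : ι) : partialDeriv i (partialDeriv i fun w => a w * g w) x =
      a x * partialDeriv i (partialDeriv i g) x + 2 * (partialDeriv i a x * partialDeriv i g x) +
        g x * partialDeriv i (partialDeriv i a) x := by
    have hda' := differentiable_partialDeriv (i := i) ha x
    have hdg' := differentiable_partialDeriv (i := i) hg x
    rw [hderiv, partialDeriv_add ((hda x).fun_mul hdg') ((hdg x).fun_mul hda'),
      partialDeriv_mul (hda x) hdg', partialDeriv_mul (hdg x) hda']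
    ring
  simp only [coordLaplacian, hterm, Finset.sum_add_distrib, Finset.mul_sum]

theorem coordLaplacian_comp_halfSumSq (hφ : ContDiff ℝ 2 φ) :
    coordLaplacian (fun w => φ (halfSumSq w)) x =
      2 * halfSumSq x * deriv (deriv φ) (halfSumSq x) +
        Fintype.card ι * deriv φ (halfSumSq x) := by
  have hdφ := hφ.differentiable two_ne_zero
  have hdφ' : Differentiable ℝ (deriv φ) := hφ.differentiable_deriv_two
  have hderiv (i : ι) : partialDeriv i (fun w => φ (halfSumSq w)) =
      fun w => w i * deriv φ (halfSumSq w) :=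
    funext fun w => partialDeriv_comp_halfSumSq (hdφ _)
  have hterm (i : ι) : partialDeriv i (partialDeriv i fun w => φ (halfSumSq w)) x =
      (x i ^ 2 : ℝ) * deriv (deriv φ) (halfSumSq x) + deriv φ (halfSumSq x) := by
    have hcomp : DifferentiableAt ℝ (fun w : ι → ℝ => deriv φ (halfSumSq w)) x :=
      (hdφ' _).comp x (hasFDerivAt_halfSumSq x).differentiableAt
    rw [hderiv, partialDeriv_mul (by fun_prop) hcomp,
      partialDeriv_comp_halfSumSq (hdφ' _), partialDeriv_coord, Pi.single_eq_same]
    push_cast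
    ring
  simp only [coordLaplacian, hterm, Finset.sum_add_distrib, ← Finset.sum_mul,
    ← Complex.ofReal_sum, ofReal_sum_sq, Finset.sum_const, Finset.card_univ, nsmul_eq_mul]

theorem coordLaplacian_mul_comp_halfSumSq {k : ℂ} (ha : ContDiff ℝ 2 a)
    (hharm : coordLaplacian a x = 0) (hhom : IsPosHomogeneous k a) (hφ : ContDiff ℝ 2 φ) :
    coordLaplacian (fun w => a w * φ (halfSumSq w)) x =
      2 * a x * (halfSumSq x * deriv (deriv φ) (halfSumSq x) +
        (k + Fintype.card ι / 2) * deriv φ (halfSumSq x)) := by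
  have hcross : ∑ i, partialDeriv i a x * partialDeriv i (fun w => φ (halfSumSq w)) x =
      k * a x * deriv φ (halfSumSq x) := by
    rw [← hhom.fderiv_apply_self (ha.differentiable two_ne_zero x), ← sum_mul_apply_single,
      Finset.sum_mul]
    refine Finset.sum_congr rfl fun i _ => ?_
    rw [partialDeriv_comp_halfSumSq (hφ.differentiable two_ne_zero _), partialDeriv]
    ring
  have hφρ : ContDiff ℝ 2 fun w : ι → ℝ => φ (halfSumSq w) := hφ.comp contDiff_halfSumSq
  rw [coordLaplacian_mul ha hφρ, coordLaplacian_comp_halfSumSq hφ, hcross, hharm]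
  ring

end Laplacian

section Polynomial

open MvPolynomial

theorem eval_smul_of_isHomogeneous {σ R : Type*} [CommSemiring R] {P : MvPolynomial σ R} {k : ℕ}
    (hP : P.IsHomogeneous k) (t : R) (x : σ → R) : eval (t • x) P = t ^ k * eval x P := by
  simp only [eval_eq, Finset.mul_sum]
  refine Finset.sum_congr rfl fun d hd => ?_
  have hdeg : ∑ i ∈ d.support, d i = k := by
    rw [← hP (mem_support_iff.1 hd), Finsupp.weight_apply]
    simp [Finsupp.sum]
  simp only [Pi.smul_apply, smul_eq_mul, mul_pow, Finset.prod_mul_distrib,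
    Finset.prod_pow_eq_pow_sum, hdeg]
  ring

variable {ι : Type*}

theorem isPosHomogeneous_ofReal_eval {P : MvPolynomial ι ℝ} {k : ℕ} (hP : P.IsHomogeneous k) :
    IsPosHomogeneous k fun x => ((eval x P : ℝ) : ℂ) := by
  intro t _ x
  simp [eval_smul_of_isHomogeneous hP]

variable [Fintype ι]

theorem contDiff_ofReal_eval (P : MvPolynomial ι ℝ) {n : WithTop ℕ∞} :
    ContDiff ℝ n fun x => ((eval x P : ℝ) : ℂ) :=
  Complex.ofRealCLM.contDiff.comp (AnalyticOnNhd.eval_mvPolynomial P).contDiff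

variable [DecidableEq ι]

theorem partialDeriv_ofReal_eval (i : ι) (P : MvPolynomial ι ℝ) :
    partialDeriv i (fun x => ((eval x P : ℝ) : ℂ)) = fun x => ((eval x (pderiv i P) : ℝ) : ℂ) := by
  funext x
  have hdiff (Q : MvPolynomial ι ℝ) : DifferentiableAt ℝ (fun x => ((eval x Q : ℝ) : ℂ)) x :=
    (contDiff_ofReal_eval Q).differentiable one_ne_zero x
  induction P using MvPolynomial.induction_on with
  | C r => simp [partialDeriv]
  | add P Q hP hQ => simp [partialDeriv_add (hdiff P) (hdiff Q), hP, hQ]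
  | mul_X P j hP =>
    simp only [map_mul, eval_X, Complex.ofReal_mul]
    rw [partialDeriv_mul (hdiff P) (by fun_prop), hP, partialDeriv_coord]
    simp only [Derivation.leibniz, smul_eq_mul, pderiv_X, Pi.single_apply, map_add, map_mul, eval_X,
      Complex.ofReal_add, Complex.ofReal_mul, add_left_inj]
    split_ifs <;> simp

theorem coordLaplacian_ofReal_eval_eq_zero {P : MvPolynomial ι ℝ}
    (hP : ∑ i, pderiv i (pderiv i P) = 0) (x : ι → ℝ) :
    coordLaplacian (fun x => ((eval x P : ℝ) : ℂ)) x = 0 := by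
  simp only [coordLaplacian, partialDeriv_ofReal_eval, ← Complex.ofReal_sum, ← map_sum, hP,
    map_zero, Complex.ofReal_zero]

end Polynomial

theorem deriv_const_mul_comp_ofReal_mul {F : ℂ → ℂ} (hF : Differentiable ℂ F) (c s : ℂ) :
    deriv (fun t : ℝ => c * F (t * s)) = fun t : ℝ => c * s * deriv F (t * s) := by
  funext t
  have hscale : HasDerivAt (fun w : ℂ => w * s) s t := by
    simpa using (hasDerivAt_id (t : ℂ)).mul_const s
  have hcomp : HasDerivAt (fun w : ℂ => F (w * s)) (deriv F (t * s) * s) t :=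
    (hF _).hasDerivAt.comp (t : ℂ) hscale
  rw [(hcomp.const_mul c).comp_ofReal.deriv]
  ring

section WeightVector

variable {p q : ℕ}

theorem HOp_eq_fderiv (f : Pt p q → ℂ) (z : Pt p q) :
    HOp p q f z = fderiv ℝ f z (-z.1, z.2) + (q / 2 - p / 2) * f z := by
  have hx : ∑ i, z.1 i * pdx p q i f z = fderiv ℝ f z (z.1, 0) :=
    sum_mul_apply_single ((fderiv ℝ f z).comp (.inl ℝ _ _)) z.1
  have hy : ∑ j, z.2 j * pdy p q j f z = fderiv ℝ f z (0, z.2) :=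
    sum_mul_apply_single ((fderiv ℝ f z).comp (.inr ℝ _ _)) z.2
  have hsplit : (-z.1, z.2) = -(z.1, 0) + (0, z.2) := by simp
  rw [HOp, hx, hy, hsplit, map_add, map_neg]
  ring

theorem HOp_eq_of_exp_flow {f : Pt p q → ℂ} {z : Pt p q} {c : ℂ} (hf : DifferentiableAt ℝ f z)
    (hflow : ∀ t : ℝ, f (Real.exp (-t) • z.1, Real.exp t • z.2) = Complex.exp (c * t) * f z) :
    HOp p q f z = (c + q / 2 - p / 2) * f z := by
  have hcurve : HasDerivAt (fun t : ℝ => (Real.exp (-t) • z.1, Real.exp t • z.2))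
      (-z.1, z.2) 0 := by
    have hneg : HasDerivAt (fun t : ℝ => Real.exp (-t)) (-1) 0 := by
      simpa using (hasDerivAt_neg (0 : ℝ)).exp
    have hpos : HasDerivAt Real.exp 1 0 := by simpa using Real.hasDerivAt_exp 0
    simpa using (hneg.smul_const z.1).prodMk (hpos.smul_const z.2)
  have hchain : HasDerivAt (fun t : ℝ => f (Real.exp (-t) • z.1, Real.exp t • z.2))
      (fderiv ℝ f z (-z.1, z.2)) 0 :=
    HasFDerivAt.comp_hasDerivAt 0 (by simpa using hf.hasFDerivAt) hcurve
  simp only [hflow] at hchain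
  rw [HOp_eq_fderiv, hchain.unique ((hasDerivAt_exp_mul_zero c).mul_const (f z))]
  ring

theorem pdx_eq_partialDeriv {f : Pt p q → ℂ} (hf : Differentiable ℝ f) (i : Fin p) (z : Pt p q) :
    pdx p q i f z = partialDeriv i (fun x => f (x, z.2)) z.1 := by
  have hslice : HasFDerivAt (fun x => f (x, z.2)) _ z.1 :=
    (hf z).hasFDerivAt.comp z.1 (hasFDerivAt_prodMk_left z.1 z.2)
  simp [pdx, partialDeriv, hslice.fderiv]

theorem sum_pdx_pdx_eq_coordLaplacian {f : Pt p q → ℂ} (hf : ContDiff ℝ 2 f) (z : Pt p q) :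
    ∑ i, pdx p q i (pdx p q i f) z = coordLaplacian (fun x => f (x, z.2)) z.1 := by
  have hpdx (i : Fin p) : Differentiable ℝ (pdx p q i f) :=
    ((hf.fderiv_right (m := 1) (by norm_num)).clm_apply contDiff_const).differentiable one_ne_zero
  simp only [coordLaplacian, pdx_eq_partialDeriv (hpdx _),
    pdx_eq_partialDeriv (hf.differentiable two_ne_zero)]

theorem psiF_eq (α : ℂ) (z : Pt p q) :
    psiF p q α z = Psi α (halfSumSq z.1 * halfSumSq z.2) :=
  congrArg (Psi α) (Complex.ofReal_mul _ _)

theorem psiF_exp_flow (α : ℂ) (t : ℝ) (z : Pt p q) :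
    psiF p q α (Real.exp (-t) • z.1, Real.exp t • z.2) = psiF p q α z := by
  have hcancel : Real.exp (-t) ^ 2 * Real.exp t ^ 2 = 1 := by
    rw [← mul_pow, ← Real.exp_add]
    simp
  rw [psiF_eq, psiF_eq, ← Complex.ofReal_mul, ← Complex.ofReal_mul, halfSumSq_smul,
    halfSumSq_smul, mul_mul_mul_comm, hcancel, one_mul]

theorem contDiff_psiF {α : ℂ} (hα : ∀ n : ℕ, α + n ≠ 0) {n : WithTop ℕ∞} :
    ContDiff ℝ n (psiF p q α) := by
  have hΨ : ContDiff ℝ n (Psi α) := (differentiable_Psi hα).contDiff.restrict_scalars ℝ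
  have hρx : ContDiff ℝ n fun z : Pt p q => (halfSumSq z.1 : ℂ) :=
    contDiff_ofReal_halfSumSq.comp contDiff_fst
  have hρy : ContDiff ℝ n fun z : Pt p q => (halfSumSq z.2 : ℂ) :=
    contDiff_ofReal_halfSumSq.comp contDiff_snd
  rw [funext (psiF_eq α)]
  exact hΨ.comp (hρx.mul hρy)

/-- The function `a(x) b(y) Ψ_α(ρ_x ρ_y)` on `ℝ^p × ℝ^q`. The highest weight vectors are
those with `a = h₁`, `b = h₂ ρ_y^μ` and `α = κ₊`. -/
noncomputable def psiProduct (a : (Fin p → ℝ) → ℂ) (b : (Fin q → ℝ) → ℂ) (α : ℂ) : Pt p q → ℂ :=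
  fun z => a z.1 * b z.2 * psiF p q α z

variable {a : (Fin p → ℝ) → ℂ} {b : (Fin q → ℝ) → ℂ} {k l α : ℂ}

theorem HOp_psiProduct (hα : ∀ n : ℕ, α + n ≠ 0) (ha : Differentiable ℝ a)
    (hb : Differentiable ℝ b) (hka : IsPosHomogeneous k a) (hlb : IsPosHomogeneous l b)
    (z : Pt p q) :
    HOp p q (psiProduct a b α) z = (-(k + p / 2) + (l + q / 2)) * psiProduct a b α z := by
  have hflow (t : ℝ) : psiProduct a b α (Real.exp (-t) • z.1, Real.exp t • z.2) =
      Complex.exp ((l - k) * t) * psiProduct a b α z := by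
    have hexp : Complex.exp ((l - k) * t) = Complex.exp (k * (-t : ℝ)) * Complex.exp (l * t) := by
      rw [← Complex.exp_add]
      push_cast
      ring_nf
    simp only [psiProduct, psiF_exp_flow, hka.apply_exp_smul, hlb.apply_exp_smul, hexp]
    ring
  have hdiff : Differentiable ℝ (psiProduct a b α) :=
    ((ha.comp differentiable_fst).mul (hb.comp differentiable_snd)).mul
      ((contDiff_psiF hα).differentiable one_ne_zero)
  rw [HOp_eq_of_exp_flow (hdiff z) hflow]
  ring

theorem XpOp_psiProduct (hκ : ∀ n : ℕ, k + p / 2 + n ≠ 0) (ha : ContDiff ℝ 2 a)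
    (hb : ContDiff ℝ 2 b) (hka : IsPosHomogeneous k a) (hharm : ∀ x, coordLaplacian a x = 0)
    (z : Pt p q) : XpOp p q (psiProduct a b (k + p / 2)) z = 0 := by
  set Ψ := Psi (k + p / 2)
  set s : ℂ := ((halfSumSq z.2 : ℝ) : ℂ)
  have hΨ : Differentiable ℂ Ψ := differentiable_Psi hκ
  have hslice : (fun x => psiProduct a b (k + p / 2) (x, z.2)) =
      fun x => a x * (b z.2 * Ψ (halfSumSq x * s)) := by
    funext x
    simp only [psiProduct, psiF_eq, mul_assoc, Ψ, s]
  have hradial : ContDiff ℝ 2 fun t : ℝ => b z.2 * Ψ (t * s) :=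
    contDiff_const.mul ((hΨ.contDiff.restrict_scalars ℝ).comp
      (Complex.ofRealCLM.contDiff.mul contDiff_const))
  have hsmooth : ContDiff ℝ 2 (psiProduct a b (k + p / 2)) :=
    ((ha.comp contDiff_fst).mul (hb.comp contDiff_snd)).mul (contDiff_psiF hκ)
  have hode := mul_deriv_deriv_Psi_add hκ (halfSumSq z.1 * s)
  rw [XpOp, sum_pdx_pdx_eq_coordLaplacian hsmooth, hslice,
    coordLaplacian_mul_comp_halfSumSq ha (hharm z.1) hka hradial,
    deriv_const_mul_comp_ofReal_mul hΨ, deriv_const_mul_comp_ofReal_mul hΨ.deriv,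
    Fintype.card_fin, ofReal_sum_sq, psiProduct, psiF_eq]
  linear_combination -(a z.1 * b z.2 * s) * hode

end WeightVector

theorem natCast_add_half_add_natCast_ne_zero {p : ℕ} (hp : 1 ≤ p) (k n : ℕ) :
    (k : ℂ) + p / 2 + n ≠ 0 := by
  have hpos : (0 : ℝ) < k + p / 2 + n := by positivity
  simpa using Complex.ofReal_ne_zero.2 hpos.ne'

theorem stmt_12_general {p q : ℕ} {k l : ℂ} {a : (Fin p → ℝ) → ℂ} {b : (Fin q → ℝ) → ℂ}
    (hpole : ∀ n : ℕ, k + p / 2 + n ≠ 0) (ha : ContDiff ℝ 2 a) (hb : ContDiff ℝ 2 b)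
    (hka : IsPosHomogeneous k a) (hlb : IsPosHomogeneous l b)
    (hharm : ∀ x, coordLaplacian a x = 0) (μ : ℕ) (f : Pt p q → ℂ)
    (hf : f = fun z => a z.1 * b z.2 * (rhoy p q z : ℂ) ^ μ * psiF p q (k + p / 2) z) :
    (∀ z, HOp p q f z = (-(k + p / 2) + (l + q / 2) + 2 * μ) * f z) ∧
      ∀ z, XpOp p q f z = 0 := by
  have hb' : ContDiff ℝ 2 fun y => b y * (halfSumSq y : ℂ) ^ μ :=
    hb.mul (contDiff_ofReal_halfSumSq.pow μ)
  have hlb' := hlb.mul (isPosHomogeneous_ofReal_halfSumSq_pow μ)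
  have hfprod : f = psiProduct a (fun y => b y * (halfSumSq y : ℂ) ^ μ) (k + p / 2) := by
    rw [hf]
    funext z
    exact congrArg (· * _) (mul_assoc _ _ _)
  rw [hfprod]
  refine ⟨fun z => ?_, XpOp_psiProduct hpole ha hb' hka hharm⟩
  rw [HOp_psiProduct hpole (ha.differentiable two_ne_zero) (hb'.differentiable two_ne_zero) hka
    hlb']
  ring

theorem stmt_12 (p q k l : ℕ) (hp : 1 ≤ p) (hq : 1 ≤ q)
    (h₁ : MvPolynomial (Fin p) ℝ) (h₂ : MvPolynomial (Fin q) ℝ)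
    (hhom₁ : h₁.IsHomogeneous k) (hhom₂ : h₂.IsHomogeneous l)
    (hharm₁ : ∑ i : Fin p, MvPolynomial.pderiv i (MvPolynomial.pderiv i h₁) = 0)
    (hharm₂ : ∑ j : Fin q, MvPolynomial.pderiv j (MvPolynomial.pderiv j h₂) = 0)
    (κp κm : ℂ) (hκp : κp = (k : ℂ) + (p : ℂ) / 2) (hκm : κm = (l : ℂ) + (q : ℂ) / 2)
    (μ : ℕ) (f : Pt p q → ℂ)
    (hf : f = fun z =>
      ((MvPolynomial.eval z.1 h₁ : ℝ) : ℂ) * ((MvPolynomial.eval z.2 h₂ : ℝ) : ℂ) *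
        ((rhoy p q z : ℝ) : ℂ) ^ μ * psiF p q κp z) :
    (∀ z, HOp p q f z = (-κp + κm + 2 * (μ : ℂ)) * f z) ∧ (∀ z, XpOp p q f z = 0) := by
  subst hκp hκm
  exact stmt_12_general (natCast_add_half_add_natCast_ne_zero hp k) (contDiff_ofReal_eval h₁)
    (contDiff_ofReal_eval h₂) (isPosHomogeneous_ofReal_eval hhom₁)
    (isPosHomogeneous_ofReal_eval hhom₂) (coordLaplacian_ofReal_eval_eq_zero hharm₁) μ f hf
end
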